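/- arXiv:1506.01655 — 2 statements merged into one kernel-verified Lean document; each statement's English description precedes it below -/
import Mathlib

section
/- There exist constants C₁ > 0 and C₂ > 0, depending only on L, η, β, κ, τ, m, δ and p, such that for every smooth solution (u, θ, q) of the thermoviscoelastic system with second sound satisfying boundary conditions (D) and every t > 0, F₁′(t) ≤ −C₁ E₁(t) + C₂ ( ∫₀ᴸ q² dx + ∫₀ᴸ q_t² dx + ∫₀ᴸ δ(x) u_xt² dx ). -/
open MeasureTheory Set intervalIntegral

noncomputable section

/-- Time derivative of a function of `(x, t)` (curried as `x ↦ t ↦ f x t`). -/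
def pdt (f : ℝ → ℝ → ℝ) : ℝ → ℝ → ℝ := fun x t => deriv (f x) t

/-- Space derivative of a function of `(x, t)`. -/
def pdx (f : ℝ → ℝ → ℝ) : ℝ → ℝ → ℝ := fun x t => deriv (fun y => f y t) x

/-- A smooth solution of the thermoviscoelastic system with second sound:
`u, θ, q` are `C^∞` and the three PDEs hold on `(0, L) × (0, ∞)`. -/
def IsSmoothSol (L η β κ τ : ℝ) (m δ p : ℝ → ℝ) (u θ q : ℝ → ℝ → ℝ) : Prop :=
  ContDiff ℝ (⊤ : ℕ∞) (Function.uncurry u) ∧ ContDiff ℝ (⊤ : ℕ∞) (Function.uncurry θ) ∧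
    ContDiff ℝ (⊤ : ℕ∞) (Function.uncurry q) ∧
    ∀ x ∈ Ioo (0 : ℝ) L, ∀ t : ℝ, 0 < t →
      (m x * pdt (pdt u) x t
          - pdx (fun y s => p y * pdx u y s + 2 * δ y * pdt (pdx u) y s) x t
          + η * pdx θ x t = 0) ∧
      (pdt θ x t + κ * pdx q x t + η * pdt (pdx u) x t = 0) ∧
      (τ * pdt q x t + β * q x t + κ * pdx θ x t = 0)

/-- Boundary conditions (D): clamped structure, temperature zero at both ends. -/
def BCD (L : ℝ) (u θ : ℝ → ℝ → ℝ) : Prop :=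
  ∀ t : ℝ, 0 ≤ t → u 0 t = 0 ∧ u L t = 0 ∧ θ 0 t = 0 ∧ θ L t = 0

/-- The first-order energy `E₁`. -/
def energy1 (L τ : ℝ) (m p : ℝ → ℝ) (u θ q : ℝ → ℝ → ℝ) (t : ℝ) : ℝ :=
  (1 / 2) * ((∫ x in (0 : ℝ)..L, p x * (pdx u x t) ^ 2)
    + (∫ x in (0 : ℝ)..L, m x * (pdt u x t) ^ 2)
    + (∫ x in (0 : ℝ)..L, (θ x t) ^ 2)
    + τ * ∫ x in (0 : ℝ)..L, (q x t) ^ 2)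

/-- The auxiliary functional `F₁`. -/
def F1 (L : ℝ) (m δ : ℝ → ℝ) (u : ℝ → ℝ → ℝ) (t : ℝ) : ℝ :=
  (∫ x in (0 : ℝ)..L, m x * pdt u x t * u x t)
    + ∫ x in (0 : ℝ)..L, δ x * (pdx u x t) ^ 2

/-!
Multiply the momentum balance `m u_tt = σ_x`, with total stress `σ = p u_x + 2 δ u_xt - η θ`, by `u`
and integrate by parts. The viscous part of `σ` is the time derivative of `∫ δ u_x²`, so the virial
identity `F₁' = ∫ m u_t² - ∫ p u_x² + η ∫ θ u_x` follows. The elastic energy `-∫ p u_x²` absorbs the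
coupling at the price of a multiple of `∫ θ²`. Poincaré's inequality bounds `∫ m u_t²` by the
dissipation `∫ δ u_xt²` and `∫ θ²` by `∫ θ_x²`, which Cattaneo's law expresses through `q` and
`q_t`.
-/

section PartialDerivatives

open Function

variable {f : ℝ → ℝ → ℝ} {m n : WithTop ℕ∞}

lemma contDiff_slice (hf : ContDiff ℝ n (uncurry f)) (t : ℝ) : ContDiff ℝ n (fun x ↦ f x t) :=
  hf.comp (contDiff_prodMk_left t)

lemma hasDerivAt_pdt (hf : Differentiable ℝ (uncurry f)) (x t : ℝ) :
    HasDerivAt (f x) (pdt f x t) t :=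
  (hf.comp ((differentiable_const x).prodMk differentiable_id) t).hasDerivAt

lemma uncurry_pdt (hf : Differentiable ℝ (uncurry f)) :
    uncurry (pdt f) = fun z ↦ fderiv ℝ (uncurry f) z (0, 1) := by
  ext ⟨x, t⟩
  exact ((hf (x, t)).hasFDerivAt.comp_hasDerivAt t
    ((hasDerivAt_const t x).prodMk (hasDerivAt_id t))).deriv

lemma uncurry_pdx (hf : Differentiable ℝ (uncurry f)) :
    uncurry (pdx f) = fun z ↦ fderiv ℝ (uncurry f) z (1, 0) := by
  ext ⟨x, t⟩
  exact ((hf (x, t)).hasFDerivAt.comp_hasDerivAt x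
    ((hasDerivAt_id x).prodMk (hasDerivAt_const x t))).deriv

lemma contDiff_pdt (hf : ContDiff ℝ n (uncurry f)) (hmn : m + 1 ≤ n) :
    ContDiff ℝ m (uncurry (pdt f)) := by
  rw [uncurry_pdt ((hf.of_le (le_add_self.trans hmn)).differentiable one_ne_zero)]
  exact (hf.fderiv_right hmn).clm_apply contDiff_const

lemma contDiff_pdx (hf : ContDiff ℝ n (uncurry f)) (hmn : m + 1 ≤ n) :
    ContDiff ℝ m (uncurry (pdx f)) := by
  rw [uncurry_pdx ((hf.of_le (le_add_self.trans hmn)).differentiable one_ne_zero)]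
  exact (hf.fderiv_right hmn).clm_apply contDiff_const

lemma pdx_pdt_comm (hf : ContDiff ℝ 2 (uncurry f)) : pdx (pdt f) = pdt (pdx f) := by
  have hd : Differentiable ℝ (uncurry f) := hf.differentiable two_ne_zero
  have hdd : Differentiable ℝ (fderiv ℝ (uncurry f)) :=
    (hf.fderiv_right one_add_one_eq_two.le).differentiable one_ne_zero
  have hpdt : Differentiable ℝ (uncurry (pdt f)) :=
    (contDiff_pdt hf one_add_one_eq_two.le).differentiable one_ne_zero
  have hpdx : Differentiable ℝ (uncurry (pdx f)) :=
    (contDiff_pdx hf one_add_one_eq_two.le).differentiable one_ne_zero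
  ext x t
  have hsymm : IsSymmSndFDerivAt ℝ (uncurry f) (x, t) :=
    hf.contDiffAt.isSymmSndFDerivAt minSmoothness_of_isRCLikeNormedField.le
  calc pdx (pdt f) x t
      = fderiv ℝ (uncurry (pdt f)) (x, t) (1, 0) := congrFun (uncurry_pdx hpdt) (x, t)
    _ = fderiv ℝ (fderiv ℝ (uncurry f)) (x, t) (1, 0) (0, 1) := by
      rw [uncurry_pdt hd, fderiv_clm_apply (hdd _) (by fun_prop)]; simp
    _ = fderiv ℝ (fderiv ℝ (uncurry f)) (x, t) (0, 1) (1, 0) := hsymm.eq _ _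
    _ = fderiv ℝ (uncurry (pdx f)) (x, t) (0, 1) := by
      rw [uncurry_pdx hd, fderiv_clm_apply (hdd _) (by fun_prop)]; simp
    _ = pdt (pdx f) x t := (congrFun (uncurry_pdt hpdx) (x, t)).symm

lemma hasDerivAt_integral_mul {w : ℝ → ℝ} {a b : ℝ} (hw : IntervalIntegrable w volume a b)
    (hf : ContDiff ℝ 1 (uncurry f)) (t : ℝ) :
    HasDerivAt (fun s ↦ ∫ x in a..b, w x * f x s) (∫ x in a..b, w x * pdt f x t) t := by
  have hft : Continuous (uncurry (pdt f)) := (contDiff_pdt hf (zero_add 1).le).continuous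
  have integrable_mul {g : ℝ → ℝ → ℝ} (hg : Continuous (uncurry g)) (s : ℝ) :
      IntervalIntegrable (fun x ↦ w x * g x s) volume a b :=
    hw.mul_continuousOn (hg.uncurry_right s).continuousOn
  obtain ⟨C, hC⟩ := (isCompact_uIcc.prod isCompact_Icc).exists_bound_of_continuousOn
    (s := uIcc a b ×ˢ Icc (t - 1) (t + 1)) hft.continuousOn
  refine (hasDerivAt_integral_of_dominated_loc_of_deriv_le (F' := fun s x ↦ w x * pdt f x s)
    (bound := fun x ↦ ‖w x‖ * C) (Icc_mem_nhds (sub_one_lt t) (lt_add_one t))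
    (.of_forall fun s ↦ (integrable_mul hf.continuous s).def'.aestronglyMeasurable)
    (integrable_mul hf.continuous t) (integrable_mul hft t).def'.aestronglyMeasurable
    (.of_forall fun x hx s hs ↦ ?_) (hw.norm.mul_const C)
    (.of_forall fun x _ s _ ↦
      (hasDerivAt_pdt (hf.differentiable one_ne_zero) x s).const_mul (w x))).2
  rw [norm_mul]
  gcongr
  exact hC (x, s) ⟨uIoc_subset_uIcc hx, hs⟩

end PartialDerivatives

section IntegralInequalities

variable {a b : ℝ} {f : ℝ → ℝ}

lemma absolutelyContinuousOnInterval_of_contDiff (hf : ContDiff ℝ 1 f) :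
    AbsolutelyContinuousOnInterval f a b :=
  have ⟨_, hK⟩ := hf.locallyLipschitz.locallyLipschitzOn.exists_lipschitzOnWith_of_compact
    isCompact_uIcc
  hK.absolutelyContinuousOnInterval

lemma absolutelyContinuousOnInterval_of_lipschitzOnWith_Icc (hab : a ≤ b)
    (hf : ∃ K, LipschitzOnWith K f (Icc a b)) : AbsolutelyContinuousOnInterval f a b :=
  have ⟨_, hK⟩ := hf
  LipschitzOnWith.absolutelyContinuousOnInterval (uIcc_of_le hab ▸ hK)

lemma absolutelyContinuousOnInterval_slice {g : ℝ → ℝ → ℝ}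
    (hg : ContDiff ℝ 1 (Function.uncurry g)) (t : ℝ) :
    AbsolutelyContinuousOnInterval (fun x ↦ g x t) a b :=
  absolutelyContinuousOnInterval_of_contDiff (contDiff_slice hg t)

lemma sq_integral_le (hab : a ≤ b) (hf : IntervalIntegrable f volume a b)
    (hf2 : IntervalIntegrable (fun x ↦ f x ^ 2) volume a b) :
    (∫ x in a..b, f x) ^ 2 ≤ (b - a) * ∫ x in a..b, f x ^ 2 := by
  rcases hab.eq_or_lt with rfl | hlt
  · simp
  have hpos : 0 < b - a := sub_pos.2 hlt
  have jensen : (⨍ x in a..b, f x) ^ 2 ≤ ⨍ x in a..b, f x ^ 2 :=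
    even_two.convexOn_pow.map_set_average_le (by fun_prop) isClosed_univ
      (by simp [uIoc_of_le hab, hlt]) (by simp [uIoc_of_le hab]) (by simp) hf.def' hf2.def'
  rw [interval_average_eq_div, interval_average_eq_div, div_pow, div_le_div_iff₀ (by positivity)
    hpos] at jensen
  nlinarith

lemma sq_sub_le_mul_integral_deriv_sq (hab : a ≤ b) (hf : AbsolutelyContinuousOnInterval f a b)
    (hf2 : IntervalIntegrable (fun x ↦ deriv f x ^ 2) volume a b) :
    (f b - f a) ^ 2 ≤ (b - a) * ∫ x in a..b, deriv f x ^ 2 := by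
  rw [← hf.integral_deriv_eq_sub]
  exact sq_integral_le hab hf.intervalIntegrable_deriv hf2

lemma poincare_inequality (hab : a ≤ b) (hf : AbsolutelyContinuousOnInterval f a b) (hfa : f a = 0)
    (hf2 : IntervalIntegrable (fun x ↦ deriv f x ^ 2) volume a b) :
    ∫ x in a..b, f x ^ 2 ≤ (b - a) ^ 2 / 2 * ∫ x in a..b, deriv f x ^ 2 := by
  have pointwise : ∀ x ∈ Icc a b, f x ^ 2 ≤ (x - a) * ∫ y in a..b, deriv f y ^ 2 := by
    intro x hx
    have hsub : uIcc a x ⊆ uIcc a b := by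
      rw [uIcc_of_le hx.1, uIcc_of_le hab]; exact Icc_subset_Icc_right hx.2
    calc f x ^ 2 = (f x - f a) ^ 2 := by rw [hfa, sub_zero]
      _ ≤ (x - a) * ∫ y in a..x, deriv f y ^ 2 :=
        sq_sub_le_mul_integral_deriv_sq hx.1 (hf.mono hsub) (hf2.mono_set hsub)
      _ ≤ (x - a) * ∫ y in a..b, deriv f y ^ 2 := by
        refine mul_le_mul_of_nonneg_left ?_ (sub_nonneg.2 hx.1)
        exact integral_mono_interval le_rfl hx.1 hx.2 (.of_forall fun _ ↦ sq_nonneg _) hf2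
  calc ∫ x in a..b, f x ^ 2 ≤ ∫ x in a..b, (x - a) * ∫ y in a..b, deriv f y ^ 2 :=
        integral_mono_on hab (hf.continuousOn.pow 2).intervalIntegrable
          (Continuous.intervalIntegrable (by fun_prop) _ _) pointwise
    _ = (b - a) ^ 2 / 2 * ∫ x in a..b, deriv f x ^ 2 := by
      rw [intervalIntegral.integral_mul_const, integral_comp_sub_right (fun x ↦ x), integral_id]
      ring

lemma weighted_poincare_inequality {w ρ : ℝ → ℝ} {A d : ℝ} (hab : a ≤ b)
    (hf : AbsolutelyContinuousOnInterval f a b) (hfa : f a = 0)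
    (hf2 : IntervalIntegrable (fun x ↦ deriv f x ^ 2) volume a b)
    (hw : IntervalIntegrable w volume a b) (hA : 0 ≤ A) (hwA : ∀ x ∈ Icc a b, w x ≤ A)
    (hρ : ContinuousOn ρ (uIcc a b)) (hd : 0 < d) (hdρ : ∀ x ∈ Icc a b, d ≤ ρ x) :
    ∫ x in a..b, w x * f x ^ 2
      ≤ A * (b - a) ^ 2 / (2 * d) * ∫ x in a..b, ρ x * deriv f x ^ 2 := by
  have hcont : ContinuousOn (fun x ↦ f x ^ 2) (uIcc a b) := hf.continuousOn.pow 2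
  calc ∫ x in a..b, w x * f x ^ 2 ≤ ∫ x in a..b, A * f x ^ 2 :=
        integral_mono_on hab (hw.mul_continuousOn hcont) (hcont.intervalIntegrable.const_mul A)
          fun x hx ↦ mul_le_mul_of_nonneg_right (hwA x hx) (sq_nonneg _)
    _ = A * ∫ x in a..b, f x ^ 2 := intervalIntegral.integral_const_mul ..
    _ ≤ A * ((b - a) ^ 2 / 2 * ∫ x in a..b, deriv f x ^ 2) := by
      gcongr; exact poincare_inequality hab hf hfa hf2
    _ = A * (b - a) ^ 2 / (2 * d) * ∫ x in a..b, d * deriv f x ^ 2 := by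
      rw [intervalIntegral.integral_const_mul]; field
    _ ≤ A * (b - a) ^ 2 / (2 * d) * ∫ x in a..b, ρ x * deriv f x ^ 2 := by
      gcongr
      exact integral_mono_on hab (hf2.const_mul d) (hf2.continuousOn_mul hρ)
        fun x hx ↦ mul_le_mul_of_nonneg_right (hdρ x hx) (sq_nonneg _)

lemma weighted_young_inequality {g ρ : ℝ → ℝ} {r : ℝ} (hab : a ≤ b) (hf : ContinuousOn f (uIcc a b))
    (hg : ContinuousOn g (uIcc a b)) (hρ : ContinuousOn ρ (uIcc a b)) (hr : 0 < r)
    (hrρ : ∀ x ∈ Icc a b, r ≤ ρ x) (c : ℝ) :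
    c * ∫ x in a..b, f x * g x
      ≤ 1 / 2 * (∫ x in a..b, ρ x * g x ^ 2) + c ^ 2 / (2 * r) * ∫ x in a..b, f x ^ 2 := by
  have hfg : IntervalIntegrable (fun x ↦ c * (f x * g x)) volume a b :=
    ContinuousOn.intervalIntegrable (by fun_prop)
  have hρg : IntervalIntegrable (fun x ↦ 1 / 2 * (ρ x * g x ^ 2)) volume a b :=
    ContinuousOn.intervalIntegrable (by fun_prop)
  have hff : IntervalIntegrable (fun x ↦ c ^ 2 / (2 * r) * f x ^ 2) volume a b :=
    ContinuousOn.intervalIntegrable (by fun_prop)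
  simp_rw [← intervalIntegral.integral_const_mul]
  rw [← intervalIntegral.integral_add hρg hff]
  refine integral_mono_on hab hfg (hρg.add hff) fun x hx ↦ ?_
  have young : 0 ≤ (r * g x - c * f x) ^ 2 / (2 * r) := by positivity
  calc c * (f x * g x) = 1 / 2 * (r * g x ^ 2) + c ^ 2 / (2 * r) * f x ^ 2
          - (r * g x - c * f x) ^ 2 / (2 * r) := by field
    _ ≤ 1 / 2 * (r * g x ^ 2) + c ^ 2 / (2 * r) * f x ^ 2 := sub_le_self _ young
    _ ≤ 1 / 2 * (ρ x * g x ^ 2) + c ^ 2 / (2 * r) * f x ^ 2 := by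
      gcongr; exact hrρ x hx

end IntegralInequalities

/-- A strong solution of the momentum balance and of Cattaneo's law on a rod that is clamped at both
ends and held at temperature zero at `0`. The equations are required for almost every `x` only: for
absolutely continuous `p` and `δ` the derivative `(p u_x + 2 δ u_xt)_x` exists almost everywhere,
and `deriv` has the junk value `0` elsewhere. -/
structure IsStrongSol (L η β κ τ : ℝ) (m δ p : ℝ → ℝ) (u θ q : ℝ → ℝ → ℝ) : Prop where
  contDiff_displacement : ContDiff ℝ 3 (Function.uncurry u)
  contDiff_temperature : ContDiff ℝ 1 (Function.uncurry θ)
  contDiff_flux : ContDiff ℝ 1 (Function.uncurry q)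
  displacement_left : ∀ t > 0, u 0 t = 0
  displacement_right : ∀ t > 0, u L t = 0
  temperature_left : ∀ t > 0, θ 0 t = 0
  momentum : ∀ t > 0, ∀ᵐ x, x ∈ Ioo 0 L →
    m x * pdt (pdt u) x t - pdx (fun y s ↦ p y * pdx u y s + 2 * δ y * pdt (pdx u) y s) x t
      + η * pdx θ x t = 0
  cattaneo : ∀ t > 0, ∀ᵐ x, x ∈ Ioo 0 L → τ * pdt q x t + β * q x t + κ * pdx θ x t = 0

/-- The total stress `σ`, elastic, viscous and thermal; the momentum balance is `m u_tt = σ_x`. -/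
def stress (η : ℝ) (δ p : ℝ → ℝ) (u θ : ℝ → ℝ → ℝ) (x t : ℝ) : ℝ :=
  p x * pdx u x t + 2 * δ x * pdt (pdx u) x t - η * θ x t

lemma IsSmoothSol.isStrongSol {L η β κ τ : ℝ} {m δ p : ℝ → ℝ} {u θ q : ℝ → ℝ → ℝ}
    (h : IsSmoothSol L η β κ τ m δ p u θ q) (hbc : BCD L u θ) :
    IsStrongSol L η β κ τ m δ p u θ q where
  contDiff_displacement := h.1.of_le (WithTop.coe_le_coe.2 le_top)
  contDiff_temperature := h.2.1.of_le (mod_cast le_top)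
  contDiff_flux := h.2.2.1.of_le (mod_cast le_top)
  displacement_left t ht := (hbc t ht.le).1
  displacement_right t ht := (hbc t ht.le).2.1
  temperature_left t ht := (hbc t ht.le).2.2.1
  momentum t ht := .of_forall fun x hx ↦ (h.2.2.2 x hx t ht).1
  cattaneo t ht := .of_forall fun x hx ↦ (h.2.2.2 x hx t ht).2.2

namespace IsStrongSol

variable {L η β κ τ : ℝ} {m δ p : ℝ → ℝ} {u θ q : ℝ → ℝ → ℝ} {t : ℝ}

lemma contDiff_velocity (h : IsStrongSol L η β κ τ m δ p u θ q) :
    ContDiff ℝ 2 (Function.uncurry (pdt u)) :=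
  contDiff_pdt h.contDiff_displacement two_add_one_eq_three.le

lemma contDiff_strain (h : IsStrongSol L η β κ τ m δ p u θ q) :
    ContDiff ℝ 2 (Function.uncurry (pdx u)) :=
  contDiff_pdx h.contDiff_displacement two_add_one_eq_three.le

lemma contDiff_strainRate (h : IsStrongSol L η β κ τ m δ p u θ q) :
    ContDiff ℝ 1 (Function.uncurry (pdt (pdx u))) :=
  contDiff_pdt h.contDiff_strain one_add_one_eq_two.le

lemma deriv_velocity (h : IsStrongSol L η β κ τ m δ p u θ q) (t : ℝ) :
    deriv (fun x ↦ pdt u x t) = fun x ↦ pdt (pdx u) x t := by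
  rw [← pdx_pdt_comm (h.contDiff_displacement.of_le (by norm_num))]
  rfl

lemma velocity_left (h : IsStrongSol L η β κ τ m δ p u θ q) (ht : 0 < t) : pdt u 0 t = 0 := by
  have : u 0 =ᶠ[nhds t] fun _ ↦ 0 := by
    filter_upwards [Ioi_mem_nhds ht] with s hs using h.displacement_left s hs
  exact this.deriv_eq.trans (deriv_const t 0)

lemma absolutelyContinuous_mechanicalStress (h : IsStrongSol L η β κ τ m δ p u θ q)
    (hδ : AbsolutelyContinuousOnInterval δ 0 L) (hp : AbsolutelyContinuousOnInterval p 0 L)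
    (t : ℝ) :
    AbsolutelyContinuousOnInterval
      (fun x ↦ p x * pdx u x t + 2 * δ x * pdt (pdx u) x t) 0 L :=
  (hp.fun_mul (absolutelyContinuousOnInterval_slice
    (h.contDiff_strain.of_le one_le_two) t)).fun_add
    ((hδ.const_mul 2).fun_mul (absolutelyContinuousOnInterval_slice h.contDiff_strainRate t))

lemma absolutelyContinuous_stress (h : IsStrongSol L η β κ τ m δ p u θ q)
    (hδ : AbsolutelyContinuousOnInterval δ 0 L) (hp : AbsolutelyContinuousOnInterval p 0 L)
    (t : ℝ) : AbsolutelyContinuousOnInterval (fun x ↦ stress η δ p u θ x t) 0 L :=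
  (h.absolutelyContinuous_mechanicalStress hδ hp t).fun_sub
    ((absolutelyContinuousOnInterval_slice h.contDiff_temperature t).const_mul η)

lemma ae_inertia_eq_pdx_stress (h : IsStrongSol L η β κ τ m δ p u θ q)
    (hδ : AbsolutelyContinuousOnInterval δ 0 L) (hp : AbsolutelyContinuousOnInterval p 0 L)
    (ht : 0 < t) :
    ∀ᵐ x, x ∈ Ioo 0 L → m x * pdt (pdt u) x t = pdx (stress η δ p u θ) x t := by
  filter_upwards [h.momentum t ht,
    (h.absolutelyContinuous_mechanicalStress hδ hp t).ae_differentiableAt]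
    with x momentum differentiableAt hx
  have hθ : HasDerivAt (fun y ↦ θ y t) (pdx θ x t) x :=
    ((contDiff_slice h.contDiff_temperature t).differentiable one_ne_zero x).hasDerivAt
  have hσ : HasDerivAt (fun y ↦ stress η δ p u θ y t)
      (pdx (fun y s ↦ p y * pdx u y s + 2 * δ y * pdt (pdx u) y s) x t - η * pdx θ x t) x :=
    (differentiableAt (Icc_subset_uIcc (Ioo_subset_Icc_self hx))).hasDerivAt.fun_sub
      (hθ.const_mul η)
  calc m x * pdt (pdt u) x t
      = pdx (fun y s ↦ p y * pdx u y s + 2 * δ y * pdt (pdx u) y s) x t - η * pdx θ x t := by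
        linarith [momentum hx]
    _ = pdx (stress η δ p u θ) x t := hσ.deriv.symm

lemma integral_inertia_mul_displacement (h : IsStrongSol L η β κ τ m δ p u θ q) (hL : 0 ≤ L)
    (hδ : AbsolutelyContinuousOnInterval δ 0 L) (hp : AbsolutelyContinuousOnInterval p 0 L)
    (ht : 0 < t) :
    ∫ x in 0..L, m x * pdt (pdt u) x t * u x t
      = -∫ x in 0..L, pdx u x t * stress η δ p u θ x t := by
  have hu : AbsolutelyContinuousOnInterval (fun x ↦ u x t) 0 L :=
    absolutelyContinuousOnInterval_slice (h.contDiff_displacement.of_le (by norm_num)) t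
  calc ∫ x in 0..L, m x * pdt (pdt u) x t * u x t
      = ∫ x in 0..L, u x t * pdx (stress η δ p u θ) x t := by
        refine intervalIntegral.integral_congr_ae ?_
        filter_upwards [h.ae_inertia_eq_pdx_stress hδ hp ht, Measure.ae_ne volume L]
          with x inertia_eq hxL hx
        rw [uIoc_of_le hL] at hx
        rw [inertia_eq ⟨hx.1, hx.2.lt_of_ne hxL⟩, mul_comm]
    _ = u L t * stress η δ p u θ L t - u 0 t * stress η δ p u θ 0 t
          - ∫ x in 0..L, pdx u x t * stress η δ p u θ x t :=
        hu.integral_mul_deriv_eq_deriv_mul (h.absolutelyContinuous_stress hδ hp t)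
    _ = -∫ x in 0..L, pdx u x t * stress η δ p u θ x t := by
        rw [h.displacement_left t ht, h.displacement_right t ht]; ring

lemma integral_strain_mul_stress (h : IsStrongSol L η β κ τ m δ p u θ q)
    (hδ : IntervalIntegrable δ volume 0 L) (hp : IntervalIntegrable p volume 0 L) (t : ℝ) :
    ∫ x in 0..L, pdx u x t * stress η δ p u θ x t
      = (∫ x in 0..L, p x * pdx u x t ^ 2)
        + (∫ x in 0..L, δ x * (2 * pdx u x t * pdt (pdx u) x t))
        - η * ∫ x in 0..L, θ x t * pdx u x t := by
  have hux : Continuous (fun x ↦ pdx u x t) := h.contDiff_strain.continuous.uncurry_right t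
  have huxt : Continuous (fun x ↦ pdt (pdx u) x t) :=
    h.contDiff_strainRate.continuous.uncurry_right t
  have hθ : Continuous (fun x ↦ θ x t) := h.contDiff_temperature.continuous.uncurry_right t
  have elastic : IntervalIntegrable (fun x ↦ p x * pdx u x t ^ 2) volume 0 L :=
    hp.mul_continuousOn (by fun_prop)
  have viscous : IntervalIntegrable (fun x ↦ δ x * (2 * pdx u x t * pdt (pdx u) x t)) volume 0 L :=
    hδ.mul_continuousOn (by fun_prop)
  have thermal : IntervalIntegrable (fun x ↦ η * (θ x t * pdx u x t)) volume 0 L :=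
    Continuous.intervalIntegrable (by fun_prop) _ _
  rw [← intervalIntegral.integral_const_mul, ← intervalIntegral.integral_add elastic viscous,
    ← intervalIntegral.integral_sub (elastic.add viscous) thermal]
  congr with x
  rw [stress]
  ring

lemma hasDerivAt_integral_momentum_mul_displacement (h : IsStrongSol L η β κ τ m δ p u θ q)
    (hm : IntervalIntegrable m volume 0 L) (t : ℝ) :
    HasDerivAt (fun s ↦ ∫ x in 0..L, m x * pdt u x s * u x s)
      ((∫ x in 0..L, m x * pdt (pdt u) x t * u x t) + ∫ x in 0..L, m x * pdt u x t ^ 2) t := by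
  have hu := h.contDiff_displacement
  have hut := h.contDiff_velocity
  have hutt : ContDiff ℝ 1 (Function.uncurry (pdt (pdt u))) :=
    contDiff_pdt hut one_add_one_eq_two.le
  have product_rule (x : ℝ) : pdt (fun y s ↦ pdt u y s * u y s) x t
      = pdt (pdt u) x t * u x t + pdt u x t ^ 2 := by
    rw [sq]
    exact ((hasDerivAt_pdt (hut.differentiable two_ne_zero) x t).mul
      (hasDerivAt_pdt (hu.differentiable three_ne_zero) x t)).deriv
  have cu := hu.continuous.uncurry_right t
  have cut := hut.continuous.uncurry_right t
  have cutt := hutt.continuous.uncurry_right t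
  have h1 : ContDiff ℝ 1 (Function.uncurry fun x s ↦ pdt u x s * u x s) :=
    (hut.of_le one_le_two).mul (hu.of_le (by norm_num))
  have := hasDerivAt_integral_mul hm h1 t
  simp only [product_rule, mul_add, ← mul_assoc] at this
  rwa [intervalIntegral.integral_add
    ((hm.mul_continuousOn cutt.continuousOn).mul_continuousOn cu.continuousOn)
    (hm.mul_continuousOn (by fun_prop))] at this

lemma hasDerivAt_integral_strain_sq (h : IsStrongSol L η β κ τ m δ p u θ q)
    (hδ : IntervalIntegrable δ volume 0 L) (t : ℝ) :
    HasDerivAt (fun s ↦ ∫ x in 0..L, δ x * pdx u x s ^ 2)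
      (∫ x in 0..L, δ x * (2 * pdx u x t * pdt (pdx u) x t)) t := by
  have hux := h.contDiff_strain
  have power_rule (x : ℝ) : pdt (fun y s ↦ pdx u y s ^ 2) x t
      = 2 * pdx u x t * pdt (pdx u) x t := by
    simpa [pdt] using ((hasDerivAt_pdt (hux.differentiable two_ne_zero) x t).fun_pow 2).deriv
  simpa only [power_rule] using hasDerivAt_integral_mul hδ
    (f := fun x s ↦ pdx u x s ^ 2) ((hux.of_le one_le_two).pow 2) t

lemma hasDerivAt_F1 (h : IsStrongSol L η β κ τ m δ p u θ q) (hL : 0 ≤ L)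
    (hm : IntervalIntegrable m volume 0 L) (hδ : AbsolutelyContinuousOnInterval δ 0 L)
    (hp : AbsolutelyContinuousOnInterval p 0 L) (ht : 0 < t) :
    HasDerivAt (F1 L m δ u)
      ((∫ x in 0..L, m x * pdt u x t ^ 2) - (∫ x in 0..L, p x * pdx u x t ^ 2)
        + η * ∫ x in 0..L, θ x t * pdx u x t) t := by
  have hδi : IntervalIntegrable δ volume 0 L := hδ.continuousOn.intervalIntegrable
  refine ((h.hasDerivAt_integral_momentum_mul_displacement hm t).add
    (h.hasDerivAt_integral_strain_sq hδi t)).congr_deriv ?_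
  rw [h.integral_inertia_mul_displacement hL hδ hp ht,
    h.integral_strain_mul_stress hδi hp.continuousOn.intervalIntegrable t]
  ring

lemma integral_velocity_sq_le (h : IsStrongSol L η β κ τ m δ p u θ q) (hL : 0 ≤ L) {A d : ℝ}
    (hm : IntervalIntegrable m volume 0 L) (hA : 0 ≤ A) (hmA : ∀ x ∈ Icc 0 L, m x ≤ A)
    (hδ : ContinuousOn δ (uIcc 0 L)) (hd : 0 < d) (hdδ : ∀ x ∈ Icc 0 L, d ≤ δ x) (ht : 0 < t) :
    ∫ x in 0..L, m x * pdt u x t ^ 2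
      ≤ A * L ^ 2 / (2 * d) * ∫ x in 0..L, δ x * pdt (pdx u) x t ^ 2 := by
  have hut : AbsolutelyContinuousOnInterval (fun x ↦ pdt u x t) 0 L :=
    absolutelyContinuousOnInterval_slice (h.contDiff_velocity.of_le one_le_two) t
  have huxt : Continuous (fun x ↦ pdt (pdx u) x t) :=
    h.contDiff_strainRate.continuous.uncurry_right t
  have hut2 : IntervalIntegrable (fun x ↦ deriv (fun y ↦ pdt u y t) x ^ 2) volume 0 L := by
    rw [h.deriv_velocity]
    exact (huxt.pow 2).intervalIntegrable _ _
  simpa only [h.deriv_velocity, sub_zero] using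
    weighted_poincare_inequality hL hut (h.velocity_left ht) hut2 hm hA hmA hδ hd hdδ

lemma integral_pdx_temperature_sq_le (h : IsStrongSol L η β κ τ m δ p u θ q) (hL : 0 ≤ L)
    (hκ : κ ≠ 0) (ht : 0 < t) :
    ∫ x in 0..L, pdx θ x t ^ 2
      ≤ (τ ^ 2 + β ^ 2) / κ ^ 2
        * ((∫ x in 0..L, q x t ^ 2) + ∫ x in 0..L, pdt q x t ^ 2) := by
  have integrable_sq {f : ℝ → ℝ → ℝ} (hf : Continuous (Function.uncurry f)) :
      IntervalIntegrable (fun x ↦ f x t ^ 2) volume 0 L :=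
    ((hf.uncurry_right t).pow 2).intervalIntegrable _ _
  have hθx := integrable_sq (contDiff_pdx h.contDiff_temperature (zero_add 1).le).continuous
  have hq := integrable_sq h.contDiff_flux.continuous
  have hqt := integrable_sq (contDiff_pdt h.contDiff_flux (zero_add 1).le).continuous
  rw [← intervalIntegral.integral_add hq hqt, ← intervalIntegral.integral_const_mul]
  refine integral_mono_ae_restrict hL hθx ((hq.add hqt).const_mul _) ?_
  rw [← restrict_Ioo_eq_restrict_Icc]
  filter_upwards [ae_restrict_of_ae (h.cattaneo t ht), ae_restrict_mem measurableSet_Ioo]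
    with x cattaneo hx
  have hθx_eq : κ * pdx θ x t = -(τ * pdt q x t + β * q x t) := by linarith [cattaneo hx]
  rw [div_mul_eq_mul_div, le_div_iff₀ (by positivity)]
  calc pdx θ x t ^ 2 * κ ^ 2 = (τ * pdt q x t + β * q x t) ^ 2 := by
        rw [← mul_pow, mul_comm, hθx_eq, neg_sq]
    _ ≤ (τ ^ 2 + β ^ 2) * (q x t ^ 2 + pdt q x t ^ 2) := by
        linarith [sq_nonneg (τ * q x t - β * pdt q x t)]

lemma integral_temperature_sq_le (h : IsStrongSol L η β κ τ m δ p u θ q) (hL : 0 ≤ L)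
    (hκ : κ ≠ 0) (ht : 0 < t) :
    ∫ x in 0..L, θ x t ^ 2
      ≤ L ^ 2 / 2 * ((τ ^ 2 + β ^ 2) / κ ^ 2)
        * ((∫ x in 0..L, q x t ^ 2) + ∫ x in 0..L, pdt q x t ^ 2) := by
  have hθx : Continuous (fun x ↦ pdx θ x t) :=
    (contDiff_pdx h.contDiff_temperature (zero_add 1).le).continuous.uncurry_right t
  calc ∫ x in 0..L, θ x t ^ 2 ≤ (L - 0) ^ 2 / 2 * ∫ x in 0..L, pdx θ x t ^ 2 :=
        poincare_inequality hL (absolutelyContinuousOnInterval_slice h.contDiff_temperature t)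
          (h.temperature_left t ht) ((hθx.pow 2).intervalIntegrable _ _)
    _ ≤ L ^ 2 / 2 * ((τ ^ 2 + β ^ 2) / κ ^ 2
          * ((∫ x in 0..L, q x t ^ 2) + ∫ x in 0..L, pdt q x t ^ 2)) := by
        rw [sub_zero]; gcongr; exact h.integral_pdx_temperature_sq_le hL hκ ht
    _ = _ := (mul_assoc ..).symm

lemma deriv_F1_add_energy1_le (h : IsStrongSol L η β κ τ m δ p u θ q) (hL : 0 ≤ L) (hκ : κ ≠ 0)
    {A d r : ℝ} (hm : IntervalIntegrable m volume 0 L) (hA : 0 ≤ A) (hmA : ∀ x ∈ Icc 0 L, m x ≤ A)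
    (hδ : AbsolutelyContinuousOnInterval δ 0 L) (hd : 0 < d) (hdδ : ∀ x ∈ Icc 0 L, d ≤ δ x)
    (hp : AbsolutelyContinuousOnInterval p 0 L) (hr : 0 < r) (hrp : ∀ x ∈ Icc 0 L, r ≤ p x)
    (ht : 0 < t) :
    deriv (F1 L m δ u) t + energy1 L τ m p u θ q t
      ≤ ((η ^ 2 / (2 * r) + 1 / 2) * (L ^ 2 / 2 * ((τ ^ 2 + β ^ 2) / κ ^ 2)) + |τ| / 2)
          * ((∫ x in 0..L, q x t ^ 2) + ∫ x in 0..L, pdt q x t ^ 2)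
        + 3 / 2 * (A * L ^ 2 / (2 * d)) * ∫ x in 0..L, δ x * pdt (pdx u) x t ^ 2 := by
  have virial := (h.hasDerivAt_F1 hL hm hδ hp ht).deriv
  have kinetic := h.integral_velocity_sq_le hL hm hA hmA hδ.continuousOn hd hdδ ht
  have thermal := mul_le_mul_of_nonneg_left (h.integral_temperature_sq_le hL hκ ht)
    (by positivity : 0 ≤ η ^ 2 / (2 * r) + 1 / 2)
  have coupling := weighted_young_inequality hL
    (h.contDiff_temperature.continuous.uncurry_right t).continuousOn
    (h.contDiff_strain.continuous.uncurry_right t).continuousOn hp.continuousOn hr hrp η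
  have flux : τ * ∫ x in 0..L, q x t ^ 2
      ≤ |τ| * ((∫ x in 0..L, q x t ^ 2) + ∫ x in 0..L, pdt q x t ^ 2) := by
    have hq : 0 ≤ ∫ x in 0..L, q x t ^ 2 := integral_nonneg hL fun _ _ ↦ sq_nonneg _
    have hqt : 0 ≤ ∫ x in 0..L, pdt q x t ^ 2 := integral_nonneg hL fun _ _ ↦ sq_nonneg _
    exact mul_le_mul (le_abs_self τ) (le_add_of_nonneg_right hqt) hq (abs_nonneg τ)
  rw [virial, energy1]
  linarith

end IsStrongSol

theorem F1_derivative_estimate_general {L : ℝ} (hL : 0 ≤ L) (η β τ : ℝ) {κ : ℝ} (hκ : κ ≠ 0)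
    {m δ p : ℝ → ℝ} (hm : ContinuousOn m (Icc 0 L)) (hδ : AbsolutelyContinuousOnInterval δ 0 L)
    (hp : AbsolutelyContinuousOnInterval p 0 L) (hδpos : ∀ x ∈ Icc 0 L, 0 < δ x)
    (hppos : ∀ x ∈ Icc 0 L, 0 < p x) :
    ∃ C > 0, ∀ u θ q : ℝ → ℝ → ℝ, IsStrongSol L η β κ τ m δ p u θ q → ∀ t > 0,
      HasDerivAt (F1 L m δ u) (deriv (F1 L m δ u) t) t ∧
        deriv (F1 L m δ u) t
          ≤ -energy1 L τ m p u θ q t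
            + C * ((∫ x in 0..L, q x t ^ 2) + (∫ x in 0..L, pdt q x t ^ 2)
              + ∫ x in 0..L, δ x * pdt (pdx u) x t ^ 2) := by
  have hI : uIcc 0 L = Icc 0 L := uIcc_of_le hL
  obtain ⟨A, hmA⟩ := isCompact_Icc.exists_bound_of_continuousOn hm
  obtain ⟨d, hd, hdδ⟩ := isCompact_Icc.exists_forall_le' (hI ▸ hδ.continuousOn) hδpos
  obtain ⟨r, hr, hrp⟩ := isCompact_Icc.exists_forall_le' (hI ▸ hp.continuousOn) hppos
  have hA : 0 ≤ A := (norm_nonneg _).trans (hmA 0 (left_mem_Icc.2 hL))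
  have hmi : IntervalIntegrable m volume 0 L := hm.intervalIntegrable_of_Icc hL
  set c₁ := (η ^ 2 / (2 * r) + 1 / 2) * (L ^ 2 / 2 * ((τ ^ 2 + β ^ 2) / κ ^ 2)) + |τ| / 2 with hc₁
  set c₂ := 3 / 2 * (A * L ^ 2 / (2 * d)) with hc₂
  have hc₁_nonneg : 0 ≤ c₁ := by positivity
  have hc₂_nonneg : 0 ≤ c₂ := by positivity
  refine ⟨1 + c₁ + c₂, by positivity, fun u θ q h t ht ↦
    ⟨(h.hasDerivAt_F1 hL hmi hδ hp ht).differentiableAt.hasDerivAt, ?_⟩⟩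
  have key := h.deriv_F1_add_energy1_le hL hκ hmi hA (fun x hx ↦ (le_abs_self _).trans (hmA x hx))
    hδ hd hdδ hp hr hrp ht
  rw [← hc₁, ← hc₂] at key
  have hflux : 0 ≤ (∫ x in 0..L, q x t ^ 2) + ∫ x in 0..L, pdt q x t ^ 2 :=
    add_nonneg (integral_nonneg hL fun _ _ ↦ sq_nonneg _)
      (integral_nonneg hL fun _ _ ↦ sq_nonneg _)
  have hdiss : 0 ≤ ∫ x in 0..L, δ x * pdt (pdx u) x t ^ 2 :=
    integral_nonneg hL fun x hx ↦ mul_nonneg (hδpos x hx).le (sq_nonneg _)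
  linarith [mul_nonneg (add_nonneg zero_le_one hc₂_nonneg) hflux,
    mul_nonneg (add_nonneg zero_le_one hc₁_nonneg) hdiss]

theorem F1_derivative_estimate
    (L η β κ τ : ℝ) (hL : 0 < L) (hη : 0 < η) (hβ : 0 < β) (hκ : 0 < κ) (hτ : 0 < τ)
    (m δ p : ℝ → ℝ)
    (hmLip : ∃ K, LipschitzOnWith K m (Icc 0 L))
    (hδLip : ∃ K, LipschitzOnWith K δ (Icc 0 L))
    (hpLip : ∃ K, LipschitzOnWith K p (Icc 0 L))
    (hmpos : ∀ x ∈ Icc (0 : ℝ) L, 0 < m x)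
    (hδpos : ∀ x ∈ Icc (0 : ℝ) L, 0 < δ x)
    (hppos : ∀ x ∈ Icc (0 : ℝ) L, 0 < p x)
    :
    ∃ C₁ > (0 : ℝ), ∃ C₂ > (0 : ℝ),
      ∀ u θ q : ℝ → ℝ → ℝ,
        IsSmoothSol L η β κ τ m δ p u θ q → BCD L u θ →
          ∀ t : ℝ, 0 < t →
            HasDerivAt (F1 L m δ u) (deriv (F1 L m δ u) t) t ∧
              deriv (F1 L m δ u) t
                ≤ -C₁ * energy1 L τ m p u θ q t
                  + C₂ * ((∫ x in (0 : ℝ)..L, (q x t) ^ 2)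
                    + (∫ x in (0 : ℝ)..L, (pdt q x t) ^ 2)
                    + ∫ x in (0 : ℝ)..L, δ x * (pdt (pdx u) x t) ^ 2) := by
  obtain ⟨C, hC, estimate⟩ := F1_derivative_estimate_general hL.le η β τ hκ.ne'
    hmLip.choose_spec.continuousOn
    (absolutelyContinuousOnInterval_of_lipschitzOnWith_Icc hL.le hδLip)
    (absolutelyContinuousOnInterval_of_lipschitzOnWith_Icc hL.le hpLip) hδpos hppos
  exact ⟨1, one_pos, C, hC, fun u θ q hsol hbc t ht ↦
    by simpa only [neg_one_mul] using estimate u θ q (hsol.isStrongSol hbc) t ht⟩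
end
end

section
/- (Polynomial decay, general order) There exists a constant C > 0, depending only on L, η, β, κ, τ, m, δ and p, such that for every natural number k, every smooth solution (u, θ, q) of the thermoviscoelastic system with second sound satisfying boundary conditions (D), and every t > 0, one has E⁽ᵏ⁾(t) ≤ C (E⁽ᵏ⁾(0) + E⁽ᵏ⁺¹⁾(0)) / t. -/
/-!
The energy `E` decreases only through the viscosity and the heat flux: `E' = -D` with
`D = 2 ∫ δ u_xt² + β ∫ q²`. Poincaré's inequality bounds the kinetic energy by `∫ δ u_xt²`. The flux
law expresses `θ_x` through `q` and `q_t`, so the thermal energy is bounded by `∫ q² + ∫ q_t²`; here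
`∫ q_t²` is dissipated by `(u_t, θ_t, q_t)`, which solves the same system, with energy `F` and
dissipation `D₁`. The elastic energy is recovered from the multiplier `u`, through the functional
`V = ∫ m u_t u + ∫ δ u_x²`. Altogether `V' + E ≤ N (D + D₁)` and `|V| ≤ K E`, so that
`H = N (E + F) + V + K E` is non-negative with `H' ≤ -E`. As `E` is non-increasing,
`t E(t) + H(t)` is non-increasing, hence `t E(t) ≤ H(0) ≤ (N + 2 K) (E(0) + F(0))`.
-/

open MeasureTheory Set intervalIntegral

noncomputable section

/-- `k`-th time derivative of a function of `(x, t)`. -/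
def pdtn (k : ℕ) (f : ℝ → ℝ → ℝ) : ℝ → ℝ → ℝ := fun x t => iteratedDeriv k (f x) t

/-- The `k`-th order energy `E⁽ᵏ⁾`; `E⁽⁰⁾ = E₁`, `E⁽¹⁾ = E₂`. -/
def energyN (k : ℕ) (L τ : ℝ) (m p : ℝ → ℝ) (u θ q : ℝ → ℝ → ℝ) (t : ℝ) : ℝ :=
  (1 / 2) * ((∫ x in (0 : ℝ)..L, p x * (pdtn k (pdx u) x t) ^ 2)
    + (∫ x in (0 : ℝ)..L, m x * (pdtn k (pdt u) x t) ^ 2)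
    + (∫ x in (0 : ℝ)..L, (pdtn k θ x t) ^ 2)
    + τ * ∫ x in (0 : ℝ)..L, (pdtn k q x t) ^ 2)

section SmoothFields

/-- Joint smoothness of a field `f x t`, curried as in the statement of the system. -/
def JointlySmooth (f : ℝ → ℝ → ℝ) : Prop := ContDiff ℝ (⊤ : ℕ∞) (Function.uncurry f)

variable {f g : ℝ → ℝ → ℝ}

namespace JointlySmooth

lemma contDiff_time (hf : JointlySmooth f) (x : ℝ) : ContDiff ℝ (⊤ : ℕ∞) (f x) :=
  ContDiff.comp (g := Function.uncurry f) (f := (x, ·)) hf (contDiff_prodMk_right x)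

lemma contDiff_space (hf : JointlySmooth f) (t : ℝ) : ContDiff ℝ (⊤ : ℕ∞) (f · t) :=
  ContDiff.comp (g := Function.uncurry f) (f := (·, t)) hf (contDiff_prodMk_left t)

lemma continuousOn_space (hf : JointlySmooth f) (t : ℝ) {s : Set ℝ} : ContinuousOn (f · t) s :=
  (hf.contDiff_space t).continuous.continuousOn

lemma hasDerivAt_pdt (hf : JointlySmooth f) (x t : ℝ) : HasDerivAt (f x) (pdt f x t) t :=
  ((hf.contDiff_time x).differentiable (by simp) t).hasDerivAt

lemma hasDerivAt_pdx (hf : JointlySmooth f) (x t : ℝ) : HasDerivAt (f · t) (pdx f x t) x :=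
  ((hf.contDiff_space t).differentiable (by simp) x).hasDerivAt

lemma hasFDerivAt (hf : JointlySmooth f) (z : ℝ × ℝ) :
    HasFDerivAt (Function.uncurry f) (fderiv ℝ (Function.uncurry f) z) z :=
  (ContDiff.differentiable hf (by simp) z).hasFDerivAt

lemma uncurry_pdt (hf : JointlySmooth f) :
    Function.uncurry (pdt f) = fun z => fderiv ℝ (Function.uncurry f) z (0, 1) := by
  ext ⟨x, t⟩
  exact ((hf.hasFDerivAt (x, t)).comp_hasDerivAt t
    ((hasDerivAt_const t x).prodMk (hasDerivAt_id t))).deriv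

lemma uncurry_pdx (hf : JointlySmooth f) :
    Function.uncurry (pdx f) = fun z => fderiv ℝ (Function.uncurry f) z (1, 0) := by
  ext ⟨x, t⟩
  exact ((hf.hasFDerivAt (x, t)).comp_hasDerivAt x
    ((hasDerivAt_id x).prodMk (hasDerivAt_const x t))).deriv

lemma contDiff_fderiv (hf : JointlySmooth f) :
    ContDiff ℝ (⊤ : ℕ∞) (fderiv ℝ (Function.uncurry f)) :=
  ContDiff.fderiv_right hf (by simp)

protected lemma pdt (hf : JointlySmooth f) : JointlySmooth (pdt f) := by
  rw [JointlySmooth, hf.uncurry_pdt]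
  exact hf.contDiff_fderiv.clm_apply contDiff_const

protected lemma pdx (hf : JointlySmooth f) : JointlySmooth (pdx f) := by
  rw [JointlySmooth, hf.uncurry_pdx]
  exact hf.contDiff_fderiv.clm_apply contDiff_const

protected lemma mul (hf : JointlySmooth f) (hg : JointlySmooth g) :
    JointlySmooth fun x t => f x t * g x t :=
  ContDiff.mul hf hg

lemma pdt_mul (hf : JointlySmooth f) (hg : JointlySmooth g) (x t : ℝ) :
    pdt (fun x t => f x t * g x t) x t = pdt f x t * g x t + f x t * pdt g x t :=
  ((hf.hasDerivAt_pdt x t).mul (hg.hasDerivAt_pdt x t)).deriv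

lemma pdx_pdt (hf : JointlySmooth f) : pdx (pdt f) = pdt (pdx f) := by
  have fderiv_dir (z v w : ℝ × ℝ) : fderiv ℝ (fun y => fderiv ℝ (Function.uncurry f) y v) z w
      = fderiv ℝ (fderiv ℝ (Function.uncurry f)) z w v := by
    rw [fderiv_clm_apply (hf.contDiff_fderiv.differentiable (by simp) z) (by fun_prop)]
    simp
  have symmetric (z : ℝ × ℝ) : IsSymmSndFDerivAt ℝ (Function.uncurry f) z :=
    (ContDiff.contDiffAt hf).isSymmSndFDerivAt
      (by simpa using WithTop.coe_le_coe.2 (le_top : (2 : ℕ∞) ≤ ⊤))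
  refine Function.uncurry_injective (funext fun z => ?_)
  rw [hf.pdt.uncurry_pdx, hf.pdx.uncurry_pdt, hf.uncurry_pdx, hf.uncurry_pdt]
  exact (fderiv_dir z _ _).trans ((symmetric z _ _).trans (fderiv_dir z _ _).symm)

end JointlySmooth

lemma pdtn_zero (f : ℝ → ℝ → ℝ) : pdtn 0 f = f := by
  ext x t
  simp [pdtn]

lemma pdtn_succ (k : ℕ) (f : ℝ → ℝ → ℝ) : pdtn (k + 1) f = pdt (pdtn k f) := by
  ext x t
  simp only [pdtn, pdt, iteratedDeriv_succ]
  rfl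

lemma pdtn_pdt (k : ℕ) (f : ℝ → ℝ → ℝ) : pdtn k (pdt f) = pdt (pdtn k f) := by
  induction k with
  | zero => simp only [pdtn_zero]
  | succ k ih => rw [pdtn_succ, ih, pdtn_succ]

namespace JointlySmooth

protected lemma pdtn (hf : JointlySmooth f) (k : ℕ) : JointlySmooth (pdtn k f) := by
  induction k with
  | zero => rwa [pdtn_zero]
  | succ k ih => exact pdtn_succ k f ▸ ih.pdt

lemma pdtn_pdx (hf : JointlySmooth f) (k : ℕ) : pdtn k (pdx f) = pdx (pdtn k f) := by
  induction k with
  | zero => simp only [pdtn_zero]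
  | succ k ih => rw [pdtn_succ, ih, pdtn_succ, (hf.pdtn k).pdx_pdt]

end JointlySmooth

end SmoothFields

/-- The weighted `L²` inner product `∫ w f g` on the interval from `a` to `b`. It is used for
non-negative weights `w`, but no positivity is built in. -/
def weightedInner (a b : ℝ) (w f g : ℝ → ℝ) : ℝ := ∫ x in a..b, w x * (f x * g x)

section WeightedInner

variable {a b : ℝ} {w v f g h f' g' : ℝ → ℝ}

local notation "⟪" f ", " g "⟫[" w "]" => weightedInner a b w f g

lemma weightedInner_comm (a b : ℝ) (w f g : ℝ → ℝ) :
    weightedInner a b w f g = weightedInner a b w g f := by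
  simp only [weightedInner, mul_comm (f _)]

lemma intervalIntegrable_weight_mul (hw : IntervalIntegrable w volume a b)
    (hf : ContinuousOn f (uIcc a b)) (hg : ContinuousOn g (uIcc a b)) :
    IntervalIntegrable (fun x => w x * (f x * g x)) volume a b :=
  hw.mul_continuousOn (hf.mul hg)

lemma weightedInner_add_left (hw : IntervalIntegrable w volume a b)
    (hf : ContinuousOn f (uIcc a b)) (hg : ContinuousOn g (uIcc a b))
    (hh : ContinuousOn h (uIcc a b)) :
    ⟪fun x => f x + g x, h⟫[w] = ⟪f, h⟫[w] + ⟪g, h⟫[w] := by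
  simp only [weightedInner, add_mul, mul_add]
  exact intervalIntegral.integral_add (intervalIntegrable_weight_mul hw hf hh)
    (intervalIntegrable_weight_mul hw hg hh)

lemma weightedInner_const_mul_left (c : ℝ) :
    ⟪fun x => c * f x, g⟫[w] = c * ⟪f, g⟫[w] := by
  simp only [weightedInner, mul_assoc, mul_left_comm _ c, intervalIntegral.integral_const_mul]

lemma weightedInner_linear_combination_eq_zero {c d e : ℝ} {φ : ℝ → ℝ} (hab : a ≤ b)
    (hw : IntervalIntegrable w volume a b) (hf : ContinuousOn f (uIcc a b))
    (hg : ContinuousOn g (uIcc a b)) (hh : ContinuousOn h (uIcc a b))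
    (hφ : ContinuousOn φ (uIcc a b)) (hzero : ∀ x ∈ Ioo a b, c * f x + d * g x + e * h x = 0) :
    c * ⟪f, φ⟫[w] + d * ⟪g, φ⟫[w] + e * ⟪h, φ⟫[w] = 0 := by
  simp only [← weightedInner_const_mul_left]
  rw [← weightedInner_add_left hw (by fun_prop) (by fun_prop) hφ,
    ← weightedInner_add_left hw (by fun_prop) (by fun_prop) hφ, weightedInner,
    integral_congr_Ioo_of_le hab (g := 0) fun x hx => by simp [hzero x hx]]
  simp

lemma integral_weight_add_mul (c : ℝ) (hw : IntervalIntegrable w volume a b)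
    (hv : IntervalIntegrable v volume a b) (hf : ContinuousOn f (uIcc a b))
    (hg : ContinuousOn g (uIcc a b)) (hh : ContinuousOn h (uIcc a b)) :
    ∫ x in a..b, (w x * f x + c * v x * g x) * h x = ⟪f, h⟫[w] + c * ⟪g, h⟫[v] := by
  rw [weightedInner, weightedInner, ← intervalIntegral.integral_const_mul,
    ← intervalIntegral.integral_add (intervalIntegrable_weight_mul hw hf hh)
      ((intervalIntegrable_weight_mul hv hg hh).const_mul c)]
  congr 1 with x
  ring

lemma weightedInner_one_deriv_left (hf : ∀ x ∈ uIcc a b, HasDerivAt f (f' x) x)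
    (hg : ∀ x ∈ uIcc a b, HasDerivAt g (g' x) x) (hf' : ContinuousOn f' (uIcc a b))
    (hg' : ContinuousOn g' (uIcc a b)) (ha : f a = 0) (hb : f b = 0) :
    ⟪f', g⟫[1] = -⟪f, g'⟫[1] := by
  have byParts := integral_mul_deriv_eq_deriv_mul hf hg hf'.intervalIntegrable
    hg'.intervalIntegrable
  simp only [weightedInner, Pi.one_apply, one_mul, byParts, ha, hb]
  ring

lemma weightedInner_self_nonneg (hab : a ≤ b) (hw : ∀ x ∈ Icc a b, 0 ≤ w x) (f : ℝ → ℝ) :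
    0 ≤ ⟪f, f⟫[w] :=
  integral_nonneg hab fun x hx => mul_nonneg (hw x hx) (mul_self_nonneg _)

lemma weightedInner_self_le_mul {c : ℝ} (hab : a ≤ b) (hw : IntervalIntegrable w volume a b)
    (hv : IntervalIntegrable v volume a b) (hf : ContinuousOn f (uIcc a b))
    (hwv : ∀ x ∈ Icc a b, w x ≤ c * v x) : ⟪f, f⟫[w] ≤ c * ⟪f, f⟫[v] := by
  rw [weightedInner, weightedInner, ← intervalIntegral.integral_const_mul]
  refine integral_mono_on hab (intervalIntegrable_weight_mul hw hf hf)
    ((intervalIntegrable_weight_mul hv hf hf).const_mul c) fun x hx => ?_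
  exact (mul_le_mul_of_nonneg_right (hwv x hx) (mul_self_nonneg _)).trans_eq (mul_assoc ..)

lemma two_mul_weightedInner_le (hab : a ≤ b) (hw : IntervalIntegrable w volume a b)
    (hw₀ : ∀ x ∈ Icc a b, 0 ≤ w x) (hf : ContinuousOn f (uIcc a b))
    (hg : ContinuousOn g (uIcc a b)) (r s : ℝ) :
    2 * r * s * ⟪f, g⟫[w] ≤ r ^ 2 * ⟪f, f⟫[w] + s ^ 2 * ⟪g, g⟫[w] := by
  have iff := (intervalIntegrable_weight_mul hw hf hf).const_mul (r ^ 2)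
  have ifg := (intervalIntegrable_weight_mul hw hf hg).const_mul (2 * r * s)
  have igg := (intervalIntegrable_weight_mul hw hg hg).const_mul (s ^ 2)
  simp only [weightedInner, ← intervalIntegral.integral_const_mul]
  rw [← intervalIntegral.integral_add iff igg]
  refine integral_mono_on hab ifg (iff.add igg) fun x hx => ?_
  linear_combination mul_nonneg (hw₀ x hx) (sq_nonneg (r * f x - s * g x))

lemma sq_le_mul_weightedInner_deriv (hf : ∀ x ∈ Icc a b, HasDerivAt f (f' x) x)
    (hf' : ContinuousOn f' (Icc a b)) (ha : f a = 0) {x : ℝ} (hx : x ∈ Icc a b) :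
    f x ^ 2 ≤ (b - a) * ⟪f', f'⟫[1] := by
  have hab : a ≤ b := hx.1.trans hx.2
  have hsub : uIcc a x ⊆ Icc a b := uIcc_of_le hx.1 ▸ Icc_subset_Icc_right hx.2
  have hf'x : ContinuousOn f' (uIcc a x) := hf'.mono hsub
  have fundamental : weightedInner a x 1 1 f' = f x := by
    simpa [weightedInner, ha] using
      integral_eq_sub_of_hasDerivAt (fun y hy => hf y (hsub hy)) hf'x.intervalIntegrable
  have cauchySchwarz : f x ^ 2 ≤ (x - a) * weightedInner a x 1 f' f' := by
    rcases hx.1.eq_or_lt with rfl | hax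
    · simp [ha]
    have young := two_mul_weightedInner_le (w := 1) (f := 1) hx.1 intervalIntegrable_const
      (fun _ _ => zero_le_one) continuousOn_const hf'x (f x) (x - a)
    have length : weightedInner a x 1 1 1 = x - a := by simp [weightedInner]
    rw [fundamental, length] at young
    refine le_of_mul_le_mul_left ?_ (sub_pos.2 hax)
    linarith
  refine cauchySchwarz.trans (mul_le_mul (by linarith [hx.2]) ?_ ?_ (sub_nonneg.2 hab))
  · exact integral_mono_interval le_rfl hx.1 hx.2
      (.of_forall fun y => mul_nonneg zero_le_one (mul_self_nonneg _))
      (intervalIntegrable_weight_mul intervalIntegrable_const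
        (uIcc_of_le hab ▸ hf') (uIcc_of_le hab ▸ hf'))
  · exact weightedInner_self_nonneg hx.1 (fun _ _ => zero_le_one) f'

lemma exists_pos_forall_le_mul {X : Type*} [TopologicalSpace X] {K : Set X} {w v : X → ℝ}
    (hK : IsCompact K) (hw : ContinuousOn w K) (hv : ContinuousOn v K) (hv₀ : ∀ x ∈ K, 0 < v x) :
    ∃ c > 0, ∀ x ∈ K, w x ≤ c * v x := by
  obtain ⟨c, hc⟩ := hK.bddAbove_image (hw.div hv fun x hx => (hv₀ x hx).ne')
  refine ⟨max c 1, by positivity, fun x hx => (div_le_iff₀ (hv₀ x hx)).1 ?_⟩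
  exact (hc (mem_image_of_mem _ hx)).trans (le_max_left c 1)

lemma exists_mul_weightedInner_one_le (hab : a ≤ b) (hv : ContinuousOn v (Icc a b))
    (hv₀ : ∀ x ∈ Icc a b, 0 < v x) (r : ℝ) :
    ∃ c ≥ 0, ∀ f g : ℝ → ℝ, ContinuousOn f (uIcc a b) → ContinuousOn g (uIcc a b) →
      r * ⟪f, g⟫[1] ≤ c * ⟪f, f⟫[1] + ⟪g, g⟫[v] / 2 := by
  obtain ⟨c, hc, hcv⟩ :=
    exists_pos_forall_le_mul isCompact_Icc (w := 1) continuousOn_const hv hv₀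
  refine ⟨c * r ^ 2 / 2, by positivity, fun f g hf hg => ?_⟩
  have young := two_mul_weightedInner_le (w := 1) hab intervalIntegrable_const
    (fun _ _ => zero_le_one) hf hg (c * r) 1
  have compare := weightedInner_self_le_mul (w := 1) hab intervalIntegrable_const
    (hv.intervalIntegrable_of_Icc hab) hg hcv
  refine le_of_mul_le_mul_left ?_ (mul_pos two_pos hc)
  linarith

lemma exists_poincare (hab : a ≤ b) (hw : IntervalIntegrable w volume a b)
    (hw₀ : ∀ x ∈ Icc a b, 0 ≤ w x) (hv : ContinuousOn v (Icc a b))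
    (hv₀ : ∀ x ∈ Icc a b, 0 < v x) :
    ∃ c ≥ 0, ∀ f f' : ℝ → ℝ, (∀ x ∈ Icc a b, HasDerivAt f (f' x) x) →
      ContinuousOn f' (Icc a b) → f a = 0 → ⟪f, f⟫[w] ≤ c * ⟪f', f'⟫[v] := by
  obtain ⟨c, hc, hcv⟩ := exists_pos_forall_le_mul isCompact_Icc (w := 1) continuousOn_const hv hv₀
  have mass_nonneg : 0 ≤ ∫ x in a..b, w x := integral_nonneg hab hw₀
  have hba : 0 ≤ b - a := sub_nonneg.2 hab
  refine ⟨(∫ x in a..b, w x) * ((b - a) * c), mul_nonneg mass_nonneg (mul_nonneg hba hc.le),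
    fun f f' hf hf' ha => ?_⟩
  have hfc : ContinuousOn f (uIcc a b) := uIcc_of_le hab ▸ HasDerivAt.continuousOn hf
  calc ⟪f, f⟫[w] ≤ ∫ x in a..b, w x * ((b - a) * ⟪f', f'⟫[1]) := by
        refine integral_mono_on hab (intervalIntegrable_weight_mul hw hfc hfc)
          (hw.mul_const _) fun x hx => mul_le_mul_of_nonneg_left ?_ (hw₀ x hx)
        rw [← sq]
        exact sq_le_mul_weightedInner_deriv hf hf' ha hx
    _ = (∫ x in a..b, w x) * ((b - a) * ⟪f', f'⟫[1]) := intervalIntegral.integral_mul_const _ _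
    _ ≤ (∫ x in a..b, w x) * ((b - a) * (c * ⟪f', f'⟫[v])) := by
        gcongr
        exact weightedInner_self_le_mul hab intervalIntegrable_const
          (hv.intervalIntegrable_of_Icc hab) (uIcc_of_le hab ▸ hf') hcv
    _ = (∫ x in a..b, w x) * ((b - a) * c) * ⟪f', f'⟫[v] := by ring

end WeightedInner

section TimeDerivative

variable {a b : ℝ} {w φ : ℝ → ℝ} {f g : ℝ → ℝ → ℝ}

local notation "⟪" f ", " g "⟫[" w "]" => weightedInner a b w f g

lemma hasDerivAt_integral_weight_mul (hw : IntervalIntegrable w volume a b)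
    (hf : JointlySmooth f) (t : ℝ) :
    HasDerivAt (fun s => ∫ x in a..b, w x * f x s) (∫ x in a..b, w x * pdt f x t) t := by
  obtain ⟨C, hC⟩ := (isCompact_uIcc.prod isCompact_Icc).exists_bound_of_continuousOn
    (s := uIcc a b ×ˢ Icc (t - 1) (t + 1)) (ContDiff.continuous hf.pdt).continuousOn
  have integrable {g : ℝ → ℝ → ℝ} (hg : JointlySmooth g) (s : ℝ) :
      IntervalIntegrable (fun x => w x * g x s) volume a b :=
    hw.mul_continuousOn (hg.continuousOn_space s)
  have nhds : Icc (t - 1) (t + 1) ∈ nhds t := Icc_mem_nhds (by linarith) (by linarith)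
  refine (hasDerivAt_integral_of_dominated_loc_of_deriv_le (bound := fun x => ‖w x‖ * C) nhds
    (.of_forall fun s => (integrable hf s).def'.aestronglyMeasurable) (integrable hf t)
    (integrable hf.pdt t).def'.aestronglyMeasurable (.of_forall fun x hx s hs => ?_)
    (hw.norm.mul_const C)
    (.of_forall fun x _ s _ => (hf.hasDerivAt_pdt x s).const_mul (w x))).2
  rw [norm_mul]
  exact mul_le_mul_of_nonneg_left (hC (x, s) ⟨uIoc_subset_uIcc hx, hs⟩) (norm_nonneg _)

lemma hasDerivAt_weightedInner (hw : IntervalIntegrable w volume a b) (hf : JointlySmooth f)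
    (hg : JointlySmooth g) (t : ℝ) :
    HasDerivAt (fun s => ⟪(f · s), (g · s)⟫[w])
      (⟪(pdt f · t), (g · t)⟫[w] + ⟪(f · t), (pdt g · t)⟫[w]) t := by
  refine (hasDerivAt_integral_weight_mul hw (hf.mul hg) t).congr_deriv ?_
  simp only [hf.pdt_mul hg, mul_add]
  exact intervalIntegral.integral_add
    (intervalIntegrable_weight_mul hw (hf.pdt.continuousOn_space t) (hg.continuousOn_space t))
    (intervalIntegrable_weight_mul hw (hf.continuousOn_space t) (hg.pdt.continuousOn_space t))

lemma hasDerivAt_weightedInner_self (hw : IntervalIntegrable w volume a b)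
    (hf : JointlySmooth f) (t : ℝ) :
    HasDerivAt (fun s => ⟪(f · s), (f · s)⟫[w]) (2 * ⟪(pdt f · t), (f · t)⟫[w]) t := by
  refine (hasDerivAt_weightedInner hw hf hf t).congr_deriv ?_
  rw [weightedInner_comm a b w (f · t), two_mul]

lemma hasDerivAt_weightedInner_test (hw : IntervalIntegrable w volume a b)
    (hf : JointlySmooth f) (hφ : ContinuousOn φ (uIcc a b)) (t : ℝ) :
    HasDerivAt (fun s => ⟪(f · s), φ⟫[w]) ⟪(pdt f · t), φ⟫[w] t := by
  simpa only [weightedInner, mul_assoc, mul_comm (φ _)] using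
    hasDerivAt_integral_weight_mul (hw.mul_continuousOn hφ) hf t

end TimeDerivative

lemma eq_zero_of_hasDerivAt_of_eqOn_zero {f : ℝ → ℝ} {f' t : ℝ} {s : Set ℝ}
    (hs : UniqueDiffOn ℝ s) (ht : t ∈ s) (hf : ∀ r ∈ s, f r = 0) (h : HasDerivAt f f' t) :
    f' = 0 :=
  (hs t ht).eq_deriv s h.hasDerivWithinAt
    ((hasDerivWithinAt_const t s 0).congr hf (hf t ht))

lemma mul_le_of_lyapunov {E H E' H' : ℝ → ℝ} (hE : ContinuousOn E (Ici 0))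
    (hH : ContinuousOn H (Ici 0)) (hE' : ∀ t, 0 < t → HasDerivAt E (E' t) t)
    (hH' : ∀ t, 0 < t → HasDerivAt H (H' t) t) (hE'_nonpos : ∀ t, 0 < t → E' t ≤ 0)
    (hH'_le : ∀ t, 0 < t → H' t ≤ -E t) {t : ℝ} (ht : 0 ≤ t) (hHt : 0 ≤ H t) :
    t * E t ≤ H 0 := by
  have hasDeriv (s : ℝ) (hs : 0 < s) :
      HasDerivAt (fun s => s * E s + H s) (1 * E s + s * E' s + H' s) s :=
    ((hasDerivAt_id s).mul (hE' s hs)).add (hH' s hs)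
  have antitone : AntitoneOn (fun s => s * E s + H s) (Ici 0) := by
    refine antitoneOn_of_hasDerivWithinAt_nonpos (convex_Ici 0) (by fun_prop)
      (fun s hs => (hasDeriv s (interior_Ici.subset hs)).hasDerivWithinAt) fun s hs => ?_
    have hs : 0 < s := interior_Ici.subset hs
    linarith [hH'_le s hs, mul_nonpos_of_nonneg_of_nonpos hs.le (hE'_nonpos s hs)]
  have := antitone self_mem_Ici ht ht
  simp only [zero_mul, zero_add] at this
  linarith


lemma mul_le_of_dissipation {E F V V' D D₁ : ℝ → ℝ} {N K : ℝ} (hN : 0 ≤ N) (hK : 0 ≤ K)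
    (hE : ContinuousOn E (Ici 0)) (hF : ContinuousOn F (Ici 0)) (hV : ContinuousOn V (Ici 0))
    (hE' : ∀ t, 0 < t → HasDerivAt E (-D t) t) (hF' : ∀ t, 0 < t → HasDerivAt F (-D₁ t) t)
    (hV' : ∀ t, 0 < t → HasDerivAt V (V' t) t) (hE₀ : ∀ t, 0 ≤ t → 0 ≤ E t)
    (hF₀ : ∀ t, 0 ≤ t → 0 ≤ F t) (hD : ∀ t, 0 < t → 0 ≤ D t)
    (hVE : ∀ t, 0 ≤ t → |V t| ≤ K * E t)
    (hV'E : ∀ t, 0 < t → V' t + E t ≤ N * (D t + D₁ t)) {t : ℝ} (ht : 0 ≤ t) :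
    t * E t ≤ (N + 2 * K) * (E 0 + F 0) := by
  let H : ℝ → ℝ := fun s => N * (E s + F s) + (V s + K * E s)
  have H_nonneg : 0 ≤ H t := by
    have := mul_nonneg hN (add_nonneg (hE₀ t ht) (hF₀ t ht))
    linarith [neg_le_of_abs_le (hVE t ht)]
  have lyapunov : t * E t ≤ H 0 := by
    refine mul_le_of_lyapunov hE (by fun_prop) hE'
      (fun s hs => (((hE' s hs).add (hF' s hs)).const_mul N).add
        ((hV' s hs).add ((hE' s hs).const_mul K)))
      (fun s hs => neg_nonpos.2 (hD s hs)) (fun s hs => ?_) ht H_nonneg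
    linarith [hV'E s hs, mul_nonneg hK (hD s hs)]
  linarith [le_of_abs_le (hVE 0 le_rfl), mul_nonneg hK (hF₀ 0 le_rfl)]

section Thermoviscoelastic

variable {L η β κ τ : ℝ} {m δ p : ℝ → ℝ} {u θ q : ℝ → ℝ → ℝ}

local notation "⟪" f ", " g "⟫[" w "]" => weightedInner 0 L w f g

variable (L η β κ τ m δ p u θ q) in
/-- Weak form in `x` of the system with boundary conditions (D), tested at each time `t > 0`.
The stress `p u_x + 2 δ u_xt` of a smooth solution need not have a continuous `x`-derivative, so
only this form can be differentiated in time. -/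
structure IsWeakSolution : Prop where
  smooth_u : JointlySmooth u
  smooth_θ : JointlySmooth θ
  smooth_q : JointlySmooth q
  boundary : BCD L u θ
  momentum : ∀ t, 0 < t → ∀ φ : ℝ → ℝ, ContDiff ℝ 1 φ → φ 0 = 0 → φ L = 0 →
    ⟪(pdt (pdt u) · t), φ⟫[m] + ⟪(pdx u · t), deriv φ⟫[p]
      + 2 * ⟪(pdt (pdx u) · t), deriv φ⟫[δ] + η * ⟪(pdx θ · t), φ⟫[1] = 0
  heat : ∀ t, 0 < t → ∀ φ : ℝ → ℝ, Continuous φ →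
    ⟪(pdt θ · t), φ⟫[1] + κ * ⟪(pdx q · t), φ⟫[1] + η * ⟪(pdt (pdx u) · t), φ⟫[1] = 0
  flux : ∀ t, 0 < t → ∀ φ : ℝ → ℝ, Continuous φ →
    τ * ⟪(pdt q · t), φ⟫[1] + β * ⟪(q · t), φ⟫[1] + κ * ⟪(pdx θ · t), φ⟫[1] = 0

lemma IsSmoothSol.momentum_weak (hL : 0 ≤ L) (hm : IntervalIntegrable m volume 0 L)
    (hδ : AbsolutelyContinuousOnInterval δ 0 L) (hp : AbsolutelyContinuousOnInterval p 0 L)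
    (h : IsSmoothSol L η β κ τ m δ p u θ q) {t : ℝ} (ht : 0 < t) {φ : ℝ → ℝ}
    (hφ : ContDiff ℝ 1 φ) (hφ₀ : φ 0 = 0) (hφL : φ L = 0) :
    ⟪(pdt (pdt u) · t), φ⟫[m] + ⟪(pdx u · t), deriv φ⟫[p]
      + 2 * ⟪(pdt (pdx u) · t), deriv φ⟫[δ] + η * ⟪(pdx θ · t), φ⟫[1] = 0 := by
  obtain ⟨hu, hθ, -, equations⟩ := h
  replace hu : JointlySmooth u := hu
  replace hθ : JointlySmooth θ := hθ
  let stress : ℝ → ℝ := fun x => p x * pdx u x t + 2 * δ x * pdt (pdx u) x t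
  have absCont {f : ℝ → ℝ} (hf : ContDiff ℝ 1 f) : AbsolutelyContinuousOnInterval f 0 L :=
    hf.contDiffOn.absolutelyContinuousOnInterval
  have stress_absCont : AbsolutelyContinuousOnInterval stress 0 L :=
    (hp.fun_mul (absCont ((hu.pdx.contDiff_space t).of_le (by simp)))).fun_add
      ((hδ.const_mul 2).fun_mul (absCont ((hu.pdx.pdt.contDiff_space t).of_le (by simp))))
  have deriv_stress (x : ℝ) (hx : x ∈ Ioo 0 L) :
      deriv stress x * φ x
        = (m x * pdt (pdt u) x t + η * (1 : ℝ → ℝ) x * pdx θ x t) * φ x := by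
    have balance : m x * pdt (pdt u) x t - deriv stress x + η * pdx θ x t = 0 :=
      (equations x hx t ht).1
    simp only [Pi.one_apply]
    linear_combination -φ x * balance
  have byParts := stress_absCont.integral_mul_deriv_eq_deriv_mul (absCont hφ)
  rw [hφ₀, hφL, integral_congr_Ioo_of_le hL deriv_stress,
    integral_weight_add_mul 2 hp.continuousOn.intervalIntegrable
      hδ.continuousOn.intervalIntegrable (hu.pdx.continuousOn_space t)
      (hu.pdx.pdt.continuousOn_space t) (hφ.continuous_deriv le_rfl).continuousOn,
    integral_weight_add_mul (v := 1) η hm intervalIntegrable_const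
      (hu.pdt.pdt.continuousOn_space t) (hθ.pdx.continuousOn_space t)
      hφ.continuous.continuousOn] at byParts
  linarith

lemma IsSmoothSol.isWeakSolution (hL : 0 ≤ L) (hm : IntervalIntegrable m volume 0 L)
    (hδ : AbsolutelyContinuousOnInterval δ 0 L) (hp : AbsolutelyContinuousOnInterval p 0 L)
    (h : IsSmoothSol L η β κ τ m δ p u θ q) (hbc : BCD L u θ) :
    IsWeakSolution L η β κ τ m δ p u θ q := by
  have hu : JointlySmooth u := h.1
  have hθ : JointlySmooth θ := h.2.1
  have hq : JointlySmooth q := h.2.2.1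
  refine ⟨hu, hθ, hq, hbc, fun t ht φ => h.momentum_weak hL hm hδ hp ht, fun t ht φ hφ => ?_,
    fun t ht φ hφ => ?_⟩
  · rw [← one_mul ⟪(pdt θ · t), φ⟫[1]]
    refine weightedInner_linear_combination_eq_zero hL intervalIntegrable_const
      (hθ.pdt.continuousOn_space t) (hq.pdx.continuousOn_space t) (hu.pdx.pdt.continuousOn_space t)
      hφ.continuousOn fun x hx => ?_
    linear_combination (h.2.2.2 x hx t ht).2.1
  · exact weightedInner_linear_combination_eq_zero hL intervalIntegrable_const
      (hq.pdt.continuousOn_space t) (hq.continuousOn_space t) (hθ.pdx.continuousOn_space t)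
      hφ.continuousOn fun x hx => (h.2.2.2 x hx t ht).2.2

lemma BCD.pdt (hu : JointlySmooth u) (hθ : JointlySmooth θ) (h : BCD L u θ) :
    BCD L (pdt u) (pdt θ) := by
  have pdt_eq_zero {f : ℝ → ℝ → ℝ} (hf : JointlySmooth f) {x t : ℝ} (ht : 0 ≤ t)
      (hfx : ∀ s, 0 ≤ s → f x s = 0) : _root_.pdt f x t = 0 :=
    eq_zero_of_hasDerivAt_of_eqOn_zero (uniqueDiffOn_Ici 0) ht hfx (hf.hasDerivAt_pdt x t)
  exact fun t ht => ⟨pdt_eq_zero hu ht fun s hs => (h s hs).1,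
    pdt_eq_zero hu ht fun s hs => (h s hs).2.1, pdt_eq_zero hθ ht fun s hs => (h s hs).2.2.1,
    pdt_eq_zero hθ ht fun s hs => (h s hs).2.2.2⟩

namespace IsWeakSolution

protected lemma pdt (hm : IntervalIntegrable m volume 0 L) (hδ : IntervalIntegrable δ volume 0 L)
    (hp : IntervalIntegrable p volume 0 L) (h : IsWeakSolution L η β κ τ m δ p u θ q) :
    IsWeakSolution L η β κ τ m δ p (pdt u) (pdt θ) (pdt q) where
  smooth_u := h.smooth_u.pdt
  smooth_θ := h.smooth_θ.pdt
  smooth_q := h.smooth_q.pdt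
  boundary := h.boundary.pdt h.smooth_u h.smooth_θ
  momentum t ht φ hφ hφ₀ hφL := by
    have hφ' := (hφ.continuous_deriv le_rfl).continuousOn (s := uIcc 0 L)
    rw [h.smooth_u.pdx_pdt, h.smooth_θ.pdx_pdt]
    exact eq_zero_of_hasDerivAt_of_eqOn_zero (uniqueDiffOn_Ioi 0) ht
      (fun s hs => h.momentum s hs φ hφ hφ₀ hφL)
      ((((hasDerivAt_weightedInner_test hm h.smooth_u.pdt.pdt hφ.continuous.continuousOn t).add
        (hasDerivAt_weightedInner_test hp h.smooth_u.pdx hφ' t)).add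
        ((hasDerivAt_weightedInner_test hδ h.smooth_u.pdx.pdt hφ' t).const_mul 2)).add
        ((hasDerivAt_weightedInner_test intervalIntegrable_const h.smooth_θ.pdx
          hφ.continuous.continuousOn t).const_mul η))
  heat t ht φ hφ := by
    rw [h.smooth_u.pdx_pdt, h.smooth_q.pdx_pdt]
    exact eq_zero_of_hasDerivAt_of_eqOn_zero (uniqueDiffOn_Ioi 0) ht
      (fun s hs => h.heat s hs φ hφ)
      (((hasDerivAt_weightedInner_test intervalIntegrable_const h.smooth_θ.pdt
        hφ.continuousOn t).add
        ((hasDerivAt_weightedInner_test intervalIntegrable_const h.smooth_q.pdx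
          hφ.continuousOn t).const_mul κ)).add
        ((hasDerivAt_weightedInner_test intervalIntegrable_const h.smooth_u.pdx.pdt
          hφ.continuousOn t).const_mul η))
  flux t ht φ hφ := by
    rw [h.smooth_θ.pdx_pdt]
    exact eq_zero_of_hasDerivAt_of_eqOn_zero (uniqueDiffOn_Ioi 0) ht
      (fun s hs => h.flux s hs φ hφ)
      ((((hasDerivAt_weightedInner_test intervalIntegrable_const h.smooth_q.pdt
        hφ.continuousOn t).const_mul τ).add
        ((hasDerivAt_weightedInner_test intervalIntegrable_const h.smooth_q
          hφ.continuousOn t).const_mul β)).add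
        ((hasDerivAt_weightedInner_test intervalIntegrable_const h.smooth_θ.pdx
          hφ.continuousOn t).const_mul κ))

protected lemma pdtn (hm : IntervalIntegrable m volume 0 L) (hδ : IntervalIntegrable δ volume 0 L)
    (hp : IntervalIntegrable p volume 0 L) (h : IsWeakSolution L η β κ τ m δ p u θ q) (k : ℕ) :
    IsWeakSolution L η β κ τ m δ p (pdtn k u) (pdtn k θ) (pdtn k q) := by
  induction k with
  | zero => simpa only [pdtn_zero] using h
  | succ k ih => simpa only [pdtn_succ] using ih.pdt hm hδ hp

end IsWeakSolution

variable (L τ m p u θ q) in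
/-- The energy `E⁽⁰⁾` of a triple of fields, written with `weightedInner`. -/
def energy (t : ℝ) : ℝ :=
  (⟪(pdx u · t), (pdx u · t)⟫[p] + ⟪(pdt u · t), (pdt u · t)⟫[m] + ⟪(θ · t), (θ · t)⟫[1]
    + τ * ⟪(q · t), (q · t)⟫[1]) / 2

variable (L β δ u q) in
/-- The rate at which viscosity and the heat flux dissipate `energy`. -/
def dissipation (t : ℝ) : ℝ :=
  2 * ⟪(pdt (pdx u) · t), (pdt (pdx u) · t)⟫[δ] + β * ⟪(q · t), (q · t)⟫[1]

variable (L m δ u) in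
/-- The functional produced by the multiplier `u` in the momentum equation; the term in `δ`
absorbs the viscosity, so that its derivative controls the elastic energy. -/
def virial (t : ℝ) : ℝ :=
  ⟪(pdt u · t), (u · t)⟫[m] + ⟪(pdx u · t), (pdx u · t)⟫[δ]

lemma energyN_eq_energy (hu : JointlySmooth u) (k : ℕ) :
    energyN k L τ m p u θ q = energy L τ m p (pdtn k u) (pdtn k θ) (pdtn k q) := by
  ext t
  simp only [energyN, energy, weightedInner, hu.pdtn_pdx, pdtn_pdt, Pi.one_apply, one_mul, sq]
  ring

lemma mechanical_le_two_mul_energy (hL : 0 ≤ L) (hτ : 0 ≤ τ) (m p : ℝ → ℝ) (u θ q : ℝ → ℝ → ℝ)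
    (t : ℝ) :
    ⟪(pdx u · t), (pdx u · t)⟫[p] + ⟪(pdt u · t), (pdt u · t)⟫[m]
      ≤ 2 * energy L τ m p u θ q t := by
  have one_nonneg (x : ℝ) (_ : x ∈ Icc 0 L) : 0 ≤ (1 : ℝ → ℝ) x := zero_le_one
  have thermal := weightedInner_self_nonneg hL one_nonneg (θ · t)
  have caloric := mul_nonneg hτ (weightedInner_self_nonneg hL one_nonneg (q · t))
  unfold energy
  linarith

lemma energy_nonneg (hL : 0 ≤ L) (hτ : 0 ≤ τ) (hm₀ : ∀ x ∈ Icc 0 L, 0 ≤ m x)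
    (hp₀ : ∀ x ∈ Icc 0 L, 0 ≤ p x) (u θ q : ℝ → ℝ → ℝ) (t : ℝ) :
    0 ≤ energy L τ m p u θ q t := by
  linarith [mechanical_le_two_mul_energy hL hτ m p u θ q t,
    weightedInner_self_nonneg hL hp₀ (pdx u · t), weightedInner_self_nonneg hL hm₀ (pdt u · t)]

lemma two_mul_viscous_le_dissipation (hL : 0 ≤ L) (hβ : 0 ≤ β) (δ : ℝ → ℝ) (u q : ℝ → ℝ → ℝ)
    (t : ℝ) :
    2 * ⟪(pdt (pdx u) · t), (pdt (pdx u) · t)⟫[δ] ≤ dissipation L β δ u q t :=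
  le_add_of_nonneg_right
    (mul_nonneg hβ (weightedInner_self_nonneg hL (fun _ _ => zero_le_one) (q · t)))

lemma mul_flux_le_dissipation (hL : 0 ≤ L) (hδ₀ : ∀ x ∈ Icc 0 L, 0 ≤ δ x) (β : ℝ)
    (u q : ℝ → ℝ → ℝ) (t : ℝ) : β * ⟪(q · t), (q · t)⟫[1] ≤ dissipation L β δ u q t :=
  le_add_of_nonneg_left (mul_nonneg zero_le_two (weightedInner_self_nonneg hL hδ₀ _))

lemma dissipation_nonneg (hL : 0 ≤ L) (hβ : 0 ≤ β) (hδ₀ : ∀ x ∈ Icc 0 L, 0 ≤ δ x)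
    (u q : ℝ → ℝ → ℝ) (t : ℝ) : 0 ≤ dissipation L β δ u q t :=
  (mul_nonneg zero_le_two (weightedInner_self_nonneg hL hδ₀ _)).trans
    (two_mul_viscous_le_dissipation hL hβ δ u q t)

lemma hasDerivAt_energy (hm : IntervalIntegrable m volume 0 L)
    (hp : IntervalIntegrable p volume 0 L) (hu : JointlySmooth u) (hθ : JointlySmooth θ)
    (hq : JointlySmooth q) (t : ℝ) :
    HasDerivAt (energy L τ m p u θ q)
      (⟪(pdt (pdx u) · t), (pdx u · t)⟫[p] + ⟪(pdt (pdt u) · t), (pdt u · t)⟫[m]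
        + ⟪(pdt θ · t), (θ · t)⟫[1] + τ * ⟪(pdt q · t), (q · t)⟫[1]) t := by
  refine (((((hasDerivAt_weightedInner_self hp hu.pdx t).add
    (hasDerivAt_weightedInner_self hm hu.pdt t)).add
    (hasDerivAt_weightedInner_self (w := 1) intervalIntegrable_const hθ t)).add
    ((hasDerivAt_weightedInner_self (w := 1) intervalIntegrable_const hq t).const_mul τ)).div_const
    2).congr_deriv ?_
  ring

lemma hasDerivAt_virial (hm : IntervalIntegrable m volume 0 L)
    (hδ : IntervalIntegrable δ volume 0 L) (hu : JointlySmooth u) (t : ℝ) :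
    HasDerivAt (virial L m δ u)
      (⟪(pdt (pdt u) · t), (u · t)⟫[m] + ⟪(pdt u · t), (pdt u · t)⟫[m]
        + 2 * ⟪(pdt (pdx u) · t), (pdx u · t)⟫[δ]) t :=
  (hasDerivAt_weightedInner hm hu.pdt hu t).add (hasDerivAt_weightedInner_self hδ hu.pdx t)

lemma continuous_energy (hm : IntervalIntegrable m volume 0 L)
    (hp : IntervalIntegrable p volume 0 L) (hu : JointlySmooth u) (hθ : JointlySmooth θ)
    (hq : JointlySmooth q) : Continuous (energy L τ m p u θ q) :=
  continuous_iff_continuousAt.2 fun t => (hasDerivAt_energy hm hp hu hθ hq t).continuousAt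

lemma continuous_virial (hm : IntervalIntegrable m volume 0 L)
    (hδ : IntervalIntegrable δ volume 0 L) (hu : JointlySmooth u) :
    Continuous (virial L m δ u) :=
  continuous_iff_continuousAt.2 fun t => (hasDerivAt_virial hm hδ hu t).continuousAt

lemma exists_abs_virial_le_mul_energy (hL : 0 ≤ L) (hτ : 0 ≤ τ)
    (hm : IntervalIntegrable m volume 0 L) (hδ : ContinuousOn δ (Icc 0 L))
    (hp : ContinuousOn p (Icc 0 L)) (hm₀ : ∀ x ∈ Icc 0 L, 0 ≤ m x)
    (hδ₀ : ∀ x ∈ Icc 0 L, 0 ≤ δ x) (hp₀ : ∀ x ∈ Icc 0 L, 0 < p x) :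
    ∃ K > 0, ∀ (u θ q : ℝ → ℝ → ℝ) (t : ℝ), JointlySmooth u → u 0 t = 0 →
      |virial L m δ u t| ≤ K * energy L τ m p u θ q t := by
  obtain ⟨c, hc, poincare⟩ := exists_poincare hL hm hm₀ hp hp₀
  obtain ⟨d, hd, hδp⟩ := exists_pos_forall_le_mul isCompact_Icc hδ hp hp₀
  refine ⟨1 + c + 2 * d, by positivity, fun u θ q t hu hu₀ => ?_⟩
  have displacement := poincare (u · t) (pdx u · t) (fun x _ => hu.hasDerivAt_pdx x t)
    (hu.pdx.continuousOn_space t) hu₀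
  have young := two_mul_weightedInner_le hL hm hm₀ (hu.pdt.continuousOn_space t)
    (hu.continuousOn_space t) 1
  have inertial : 2 * |⟪(pdt u · t), (u · t)⟫[m]|
      ≤ ⟪(pdt u · t), (pdt u · t)⟫[m] + c * ⟪(pdx u · t), (pdx u · t)⟫[p] := by
    rcases abs_cases ⟪(pdt u · t), (u · t)⟫[m] with h | h <;> linarith [young 1, young (-1)]
  have viscous : |⟪(pdx u · t), (pdx u · t)⟫[δ]| ≤ d * ⟪(pdx u · t), (pdx u · t)⟫[p] := by
    rw [abs_of_nonneg (weightedInner_self_nonneg hL hδ₀ _)]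
    exact weightedInner_self_le_mul hL (hδ.intervalIntegrable_of_Icc hL)
      (hp.intervalIntegrable_of_Icc hL) (hu.pdx.continuousOn_space t) hδp
  have elastic := weightedInner_self_nonneg hL (fun x hx => (hp₀ x hx).le) (pdx u · t)
  have kinetic := weightedInner_self_nonneg hL hm₀ (pdt u · t)
  calc |virial L m δ u t|
      ≤ |⟪(pdt u · t), (u · t)⟫[m]| + |⟪(pdx u · t), (pdx u · t)⟫[δ]| := abs_add_le _ _
    _ ≤ (1 + c + 2 * d)
          * (⟪(pdx u · t), (pdx u · t)⟫[p] + ⟪(pdt u · t), (pdt u · t)⟫[m]) / 2 := by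
        linarith [mul_nonneg (add_nonneg hc (mul_nonneg zero_le_two hd.le)) kinetic]
    _ ≤ (1 + c + 2 * d) * energy L τ m p u θ q t := by
        rw [mul_div_assoc]
        gcongr
        linarith [mechanical_le_two_mul_energy hL hτ m p u θ q t]

namespace IsWeakSolution

lemma hasDerivAt_energy (hm : IntervalIntegrable m volume 0 L)
    (hp : IntervalIntegrable p volume 0 L) (h : IsWeakSolution L η β κ τ m δ p u θ q) {t : ℝ}
    (ht : 0 < t) : HasDerivAt (energy L τ m p u θ q) (-dissipation L β δ u q t) t := by
  obtain ⟨hu, hθ, hq, hbc, momentum, heat, flux⟩ := h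
  obtain ⟨-, -, hθ₀, hθL⟩ := hbc t ht.le
  obtain ⟨hu'₀, hu'L, -, -⟩ := hbc.pdt hu hθ t ht.le
  have deriv_velocity : deriv (pdt u · t) = (pdt (pdx u) · t) := by
    rw [← hu.pdx_pdt]
    rfl
  have testVelocity := momentum t ht (pdt u · t) ((hu.pdt.contDiff_space t).of_le (by simp))
    hu'₀ hu'L
  rw [deriv_velocity, weightedInner_comm _ _ p] at testVelocity
  have testTemperature := heat t ht (θ · t) (hθ.contDiff_space t).continuous
  have testFlux := flux t ht (q · t) (hq.contDiff_space t).continuous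
  have velocity_byParts : ⟪(pdx θ · t), (pdt u · t)⟫[1] = -⟪(θ · t), (pdt (pdx u) · t)⟫[1] :=
    weightedInner_one_deriv_left (fun x _ => hθ.hasDerivAt_pdx x t)
      (fun x _ => hu.pdx_pdt ▸ hu.pdt.hasDerivAt_pdx x t) (hθ.pdx.continuousOn_space t)
      (hu.pdx.pdt.continuousOn_space t) hθ₀ hθL
  have flux_byParts : ⟪(pdx θ · t), (q · t)⟫[1] = -⟪(θ · t), (pdx q · t)⟫[1] :=
    weightedInner_one_deriv_left (fun x _ => hθ.hasDerivAt_pdx x t)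
      (fun x _ => hq.hasDerivAt_pdx x t) (hθ.pdx.continuousOn_space t)
      (hq.pdx.continuousOn_space t) hθ₀ hθL
  rw [weightedInner_comm _ _ _ (pdx q · t), weightedInner_comm _ _ _ (pdt (pdx u) · t)]
    at testTemperature
  refine (_root_.hasDerivAt_energy hm hp hu hθ hq t).congr_deriv ?_
  unfold dissipation
  linear_combination testVelocity + testTemperature + testFlux - η * velocity_byParts
    - κ * flux_byParts

lemma hasDerivAt_virial (hm : IntervalIntegrable m volume 0 L)
    (hδ : IntervalIntegrable δ volume 0 L) (h : IsWeakSolution L η β κ τ m δ p u θ q) {t : ℝ}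
    (ht : 0 < t) :
    HasDerivAt (virial L m δ u)
      (⟪(pdt u · t), (pdt u · t)⟫[m] - ⟪(pdx u · t), (pdx u · t)⟫[p]
        + η * ⟪(θ · t), (pdx u · t)⟫[1]) t := by
  obtain ⟨hu, hθ, -, hbc, momentum, -, -⟩ := h
  obtain ⟨hu₀, huL, hθ₀, hθL⟩ := hbc t ht.le
  have testDisplacement : _ + ⟪(pdx u · t), (pdx u · t)⟫[p]
      + 2 * ⟪(pdt (pdx u) · t), (pdx u · t)⟫[δ] + _ = 0 :=
    momentum t ht (u · t) ((hu.contDiff_space t).of_le (by simp)) hu₀ huL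
  have byParts : ⟪(pdx θ · t), (u · t)⟫[1] = -⟪(θ · t), (pdx u · t)⟫[1] :=
    weightedInner_one_deriv_left (fun x _ => hθ.hasDerivAt_pdx x t)
      (fun x _ => hu.hasDerivAt_pdx x t) (hθ.pdx.continuousOn_space t)
      (hu.pdx.continuousOn_space t) hθ₀ hθL
  refine (_root_.hasDerivAt_virial hm hδ hu t).congr_deriv ?_
  linear_combination testDisplacement - η * byParts

lemma sq_mul_weightedInner_pdx_le (hL : 0 ≤ L) (h : IsWeakSolution L η β κ τ m δ p u θ q) {t : ℝ}
    (ht : 0 < t) :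
    κ ^ 2 * ⟪(pdx θ · t), (pdx θ · t)⟫[1]
      ≤ 2 * τ ^ 2 * ⟪(pdt q · t), (pdt q · t)⟫[1] + 2 * β ^ 2 * ⟪(q · t), (q · t)⟫[1] := by
  have testGradient := h.flux t ht (pdx θ · t) (h.smooth_θ.pdx.contDiff_space t).continuous
  have young {f : ℝ → ℝ → ℝ} (hf : JointlySmooth f) (r : ℝ) :=
    two_mul_weightedInner_le (w := 1) hL intervalIntegrable_const (fun _ _ => zero_le_one)
      (hf.continuousOn_space t) (h.smooth_θ.pdx.continuousOn_space t) r κ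
  linear_combination young h.smooth_q.pdt (-2 * τ) / 2 + young h.smooth_q (-2 * β) / 2
    + 2 * κ * testGradient

end IsWeakSolution

lemma exists_thermal_le (hL : 0 ≤ L) (hκ : κ ≠ 0) (β τ : ℝ) :
    ∃ c ≥ 0, ∀ {η : ℝ} {m δ p : ℝ → ℝ} {u θ q : ℝ → ℝ → ℝ},
      IsWeakSolution L η β κ τ m δ p u θ q → ∀ t, 0 < t →
        ⟪(θ · t), (θ · t)⟫[1] ≤ c * (⟪(pdt q · t), (pdt q · t)⟫[1] + ⟪(q · t), (q · t)⟫[1]) := by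
  obtain ⟨c, hc, poincare⟩ := exists_poincare (w := 1) (v := 1) hL intervalIntegrable_const
    (fun _ _ => zero_le_one) continuousOn_const (fun _ _ => zero_lt_one)
  refine ⟨c * (2 * (τ ^ 2 + β ^ 2) / κ ^ 2), by positivity, fun {η m δ p u θ q} h t ht => ?_⟩
  have flux_nonneg := weightedInner_self_nonneg (w := 1) hL (fun _ _ => zero_le_one) (q · t)
  have flux_deriv_nonneg :=
    weightedInner_self_nonneg (w := 1) hL (fun _ _ => zero_le_one) (pdt q · t)
  calc ⟪(θ · t), (θ · t)⟫[1] ≤ c * ⟪(pdx θ · t), (pdx θ · t)⟫[1] :=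
        poincare _ _ (fun x _ => h.smooth_θ.hasDerivAt_pdx x t)
          (h.smooth_θ.pdx.continuousOn_space t) (h.boundary t ht.le).2.2.1
    _ ≤ c * (2 * (τ ^ 2 + β ^ 2) / κ ^ 2
          * (⟪(pdt q · t), (pdt q · t)⟫[1] + ⟪(q · t), (q · t)⟫[1])) := by
        gcongr
        rw [div_mul_eq_mul_div, le_div_iff₀' (by positivity)]
        linarith [h.sq_mul_weightedInner_pdx_le hL ht,
          mul_nonneg (sq_nonneg β) flux_deriv_nonneg, mul_nonneg (sq_nonneg τ) flux_nonneg]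
    _ = _ := by ring

lemma exists_virial_deriv_add_energy_le (hL : 0 ≤ L) (hβ : 0 < β) (hκ : κ ≠ 0) (hτ : 0 ≤ τ)
    (η : ℝ) (hm : IntervalIntegrable m volume 0 L) (hδ : ContinuousOn δ (Icc 0 L))
    (hp : ContinuousOn p (Icc 0 L)) (hm₀ : ∀ x ∈ Icc 0 L, 0 ≤ m x)
    (hδ₀ : ∀ x ∈ Icc 0 L, 0 < δ x) (hp₀ : ∀ x ∈ Icc 0 L, 0 < p x) :
    ∃ N ≥ 0, ∀ u θ q : ℝ → ℝ → ℝ, IsWeakSolution L η β κ τ m δ p u θ q → ∀ t, 0 < t →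
      ⟪(pdt u · t), (pdt u · t)⟫[m] - ⟪(pdx u · t), (pdx u · t)⟫[p]
        + η * ⟪(θ · t), (pdx u · t)⟫[1] + energy L τ m p u θ q t
      ≤ N * (dissipation L β δ u q t + dissipation L β δ (pdt u) (pdt q) t) := by
  obtain ⟨c₁, hc₁, poincare⟩ := exists_poincare hL hm hm₀ hδ hδ₀
  obtain ⟨c₂, hc₂, thermal⟩ := exists_thermal_le hL hκ β τ
  obtain ⟨c₃, hc₃, coupling⟩ := exists_mul_weightedInner_one_le hL hp hp₀ η
  refine ⟨c₁ + ((c₃ + 1 / 2) * c₂ + τ / 2) / β, by positivity, fun u θ q h t ht => ?_⟩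
  obtain ⟨hu'₀, -, -, -⟩ := h.boundary.pdt h.smooth_u h.smooth_θ t ht.le
  have kinetic_le := poincare (pdt u · t) (pdt (pdx u) · t)
    (fun x _ => h.smooth_u.pdx_pdt ▸ h.smooth_u.pdt.hasDerivAt_pdx x t)
    (h.smooth_u.pdx.pdt.continuousOn_space t) hu'₀
  have thermal_le := thermal h t ht
  have coupling_le := coupling (θ · t) (pdx u · t) (h.smooth_θ.continuousOn_space t)
    (h.smooth_u.pdx.continuousOn_space t)
  have δ_nonneg (x : ℝ) (hx : x ∈ Icc 0 L) : 0 ≤ δ x := (hδ₀ x hx).le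
  set D := dissipation L β δ u q t + dissipation L β δ (pdt u) (pdt q) t
  have viscous_le : 2 * ⟪(pdt (pdx u) · t), (pdt (pdx u) · t)⟫[δ] ≤ D := by
    linarith [two_mul_viscous_le_dissipation hL hβ.le δ u q t,
      dissipation_nonneg hL hβ.le δ_nonneg (pdt u) (pdt q) t]
  have flux_le : ⟪(pdt q · t), (pdt q · t)⟫[1] + ⟪(q · t), (q · t)⟫[1] ≤ D / β := by
    rw [le_div_iff₀' hβ]
    linarith [mul_flux_le_dissipation hL δ_nonneg β u q t,
      mul_flux_le_dissipation hL δ_nonneg β (pdt u) (pdt q) t]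
  have viscous_nonneg := weightedInner_self_nonneg hL δ_nonneg (pdt (pdx u) · t)
  have flux_deriv_nonneg :=
    weightedInner_self_nonneg (w := 1) hL (fun _ _ => zero_le_one) (pdt q · t)
  unfold energy
  rw [add_mul, div_mul_eq_mul_div, mul_div_assoc]
  linarith [mul_le_mul_of_nonneg_left viscous_le hc₁, mul_nonneg hc₁ viscous_nonneg,
    mul_le_mul_of_nonneg_left flux_le (by positivity : 0 ≤ (c₃ + 1 / 2) * c₂ + τ / 2),
    mul_le_mul_of_nonneg_left thermal_le (by positivity : 0 ≤ c₃ + 1 / 2),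
    mul_nonneg hτ flux_deriv_nonneg]

lemma exists_energy_le_div (hL : 0 ≤ L) (hβ : 0 < β) (hκ : κ ≠ 0) (hτ : 0 ≤ τ)
    (η : ℝ) (hm : IntervalIntegrable m volume 0 L) (hδ : ContinuousOn δ (Icc 0 L))
    (hp : ContinuousOn p (Icc 0 L)) (hm₀ : ∀ x ∈ Icc 0 L, 0 ≤ m x)
    (hδ₀ : ∀ x ∈ Icc 0 L, 0 < δ x) (hp₀ : ∀ x ∈ Icc 0 L, 0 < p x) :
    ∃ C > 0, ∀ u θ q : ℝ → ℝ → ℝ, IsWeakSolution L η β κ τ m δ p u θ q → ∀ t, 0 < t →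
      energy L τ m p u θ q t
        ≤ C * (energy L τ m p u θ q 0 + energy L τ m p (pdt u) (pdt θ) (pdt q) 0) / t := by
  have hδ_int := hδ.intervalIntegrable_of_Icc (μ := volume) hL
  have hp_int := hp.intervalIntegrable_of_Icc (μ := volume) hL
  have δ_nonneg (x : ℝ) (hx : x ∈ Icc 0 L) : 0 ≤ δ x := (hδ₀ x hx).le
  obtain ⟨N, hN, virial_deriv_add_energy_le⟩ :=
    exists_virial_deriv_add_energy_le hL hβ hκ hτ η hm hδ hp hm₀ hδ₀ hp₀
  obtain ⟨K, hK, virial_le⟩ :=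
    exists_abs_virial_le_mul_energy hL hτ hm hδ hp hm₀ δ_nonneg hp₀
  refine ⟨N + 2 * K, by positivity, fun u θ q h t ht => ?_⟩
  have h' := h.pdt hm hδ_int hp_int
  have p_nonneg (x : ℝ) (hx : x ∈ Icc 0 L) : 0 ≤ p x := (hp₀ x hx).le
  rw [le_div_iff₀' ht]
  exact mul_le_of_dissipation hN hK.le
    (continuous_energy hm hp_int h.smooth_u h.smooth_θ h.smooth_q).continuousOn
    (continuous_energy hm hp_int h'.smooth_u h'.smooth_θ h'.smooth_q).continuousOn
    (continuous_virial hm hδ_int h.smooth_u).continuousOn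
    (fun s hs => h.hasDerivAt_energy hm hp_int hs)
    (fun s hs => h'.hasDerivAt_energy hm hp_int hs)
    (fun s hs => h.hasDerivAt_virial hm hδ_int hs)
    (fun s _ => energy_nonneg hL hτ hm₀ p_nonneg _ _ _ s)
    (fun s _ => energy_nonneg hL hτ hm₀ p_nonneg _ _ _ s)
    (fun s _ => dissipation_nonneg hL hβ.le δ_nonneg u q s)
    (fun s hs => virial_le u θ q s h.smooth_u (h.boundary s hs).1)
    (virial_deriv_add_energy_le u θ q h) ht.le

theorem polynomial_decay_higher_energy_general (hL : 0 ≤ L) (hβ : 0 < β) (hκ : κ ≠ 0)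
    (hτ : 0 ≤ τ) (η : ℝ) (hm : IntervalIntegrable m volume 0 L)
    (hδ : AbsolutelyContinuousOnInterval δ 0 L) (hp : AbsolutelyContinuousOnInterval p 0 L)
    (hm₀ : ∀ x ∈ Icc 0 L, 0 ≤ m x) (hδ₀ : ∀ x ∈ Icc 0 L, 0 < δ x)
    (hp₀ : ∀ x ∈ Icc 0 L, 0 < p x) :
    ∃ C > 0, ∀ (k : ℕ) (u θ q : ℝ → ℝ → ℝ),
      IsSmoothSol L η β κ τ m δ p u θ q → BCD L u θ → ∀ t, 0 < t →
        energyN k L τ m p u θ q t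
          ≤ C * (energyN k L τ m p u θ q 0 + energyN (k + 1) L τ m p u θ q 0) / t := by
  have hδ_cont : ContinuousOn δ (Icc 0 L) := uIcc_of_le hL ▸ hδ.continuousOn
  have hp_cont : ContinuousOn p (Icc 0 L) := uIcc_of_le hL ▸ hp.continuousOn
  obtain ⟨C, hC, decay⟩ := exists_energy_le_div hL hβ hκ hτ η hm hδ_cont hp_cont hm₀
    hδ₀ hp₀
  refine ⟨C, hC, fun k u θ q h hbc t ht => ?_⟩
  have weak := (h.isWeakSolution hL hm hδ hp hbc).pdtn hm
    hδ.continuousOn.intervalIntegrable hp.continuousOn.intervalIntegrable k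
  simpa only [energyN_eq_energy h.1, pdtn_succ] using decay _ _ _ weak t ht

end Thermoviscoelastic

/-- Polynomial decay of the energies of every order. -/
theorem polynomial_decay_higher_energy
    (L η β κ τ : ℝ) (hL : 0 < L) (hη : 0 < η) (hβ : 0 < β) (hκ : 0 < κ) (hτ : 0 < τ)
    (m δ p : ℝ → ℝ)
    (hmLip : ∃ K, LipschitzOnWith K m (Icc 0 L))
    (hδLip : ∃ K, LipschitzOnWith K δ (Icc 0 L))
    (hpLip : ∃ K, LipschitzOnWith K p (Icc 0 L))
    (hmpos : ∀ x ∈ Icc (0 : ℝ) L, 0 < m x)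
    (hδpos : ∀ x ∈ Icc (0 : ℝ) L, 0 < δ x)
    (hppos : ∀ x ∈ Icc (0 : ℝ) L, 0 < p x)
    :
    ∃ C > (0 : ℝ),
      ∀ k : ℕ, ∀ u θ q : ℝ → ℝ → ℝ,
        IsSmoothSol L η β κ τ m δ p u θ q → BCD L u θ →
          ∀ t : ℝ, 0 < t →
            energyN k L τ m p u θ q t
              ≤ C * (energyN k L τ m p u θ q 0 + energyN (k + 1) L τ m p u θ q 0) / t := by
  obtain ⟨_, hm⟩ := hmLip
  obtain ⟨_, hδ⟩ := hδLip
  obtain ⟨_, hp⟩ := hpLip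
  rw [← uIcc_of_le hL.le] at hδ hp
  exact polynomial_decay_higher_energy_general hL.le hβ hκ.ne' hτ.le η
    (hm.continuousOn.intervalIntegrable_of_Icc hL.le)
    hδ.absolutelyContinuousOnInterval hp.absolutelyContinuousOnInterval
    (fun x hx => (hmpos x hx).le) hδpos hppos
end
end
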